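/- For every 0 < h₀ < 1/4 there exists C > 0 such that the bilinear form (𝒞_{h,H} u₁, u₂) := (1/2) ∫_ℝ e^{-|t|} t ( e^{ithA} B_{th} u₁, u₂ ) dt satisfies |(𝒞_{h,H} u₁, u₂)| ≤ C (1 + ‖H‖_{4,dil}) ‖|D|(hA+i)^{-1} u₁‖_{L²} ‖|D|(hA+i)^{-1} u₂‖_{L²} for all u₁, u₂ ∈ 𝒮(ℝ^d), all 0 < h < h₀, and all H. -/

import Mathlib

open MeasureTheory Filter Topology Complex
open scoped Real ENNReal FourierTransform ComplexConjugate

noncomputable section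

/-- Euclidean space `ℝ^d`. -/
abbrev Ed (d : ℕ) : Type := EuclideanSpace ℝ (Fin d)

/-- `L²(ℝ^d)` with complex values. -/
abbrev L2 (d : ℕ) := MeasureTheory.Lp ℂ 2 (volume : Measure (Ed d))

/-- The partial derivative `∂_j u`. -/
def pd (d : ℕ) (j : Fin d) (u : Ed d → ℂ) : Ed d → ℂ :=
  fun x => fderiv ℝ u x (EuclideanSpace.single j (1:ℝ))

/-- The operator `∑_{j,k} D_j (b_{jk} D_k) = - ∑_{j,k} ∂_j (b_{jk} ∂_k)` (complex
coefficients), applied to a function `u`. -/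
def divGradC (d : ℕ) (b : Ed d → Fin d → Fin d → ℂ) (u : Ed d → ℂ) : Ed d → ℂ :=
  fun x => -∑ j : Fin d, ∑ k : Fin d,
    fderiv ℝ (fun y => b y j k * fderiv ℝ u y (EuclideanSpace.single k (1:ℝ))) x
      (EuclideanSpace.single j (1:ℝ))

/-- `- div (G ∇ u) = ∑_{j,k} D_j (G_{jk} D_k) u` for a real coefficient matrix `G`. -/
def divGrad (d : ℕ) (G : Ed d → Fin d → Fin d → ℝ) (u : Ed d → ℂ) : Ed d → ℂ :=
  divGradC d (fun x j k => (G x j k : ℂ)) u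

/-- The operation `a ↦ x·∇a` on real valued functions. -/
def xdotOp (d : ℕ) : (Ed d → ℝ) → Ed d → ℝ := fun a x => fderiv ℝ a x x

/-- The operation `a ↦ x·∇a` on complex valued functions. -/
def xdotC (d : ℕ) : (Ed d → ℂ) → Ed d → ℂ := fun a x => fderiv ℝ a x x

/-- `a ∈ C_b^∞(ℝ^d)`: smooth with all derivatives bounded. -/
def CbSmooth (d : ℕ) (a : Ed d → ℝ) : Prop :=
  ContDiff ℝ (⊤ : ℕ∞) a ∧ ∀ n : ℕ, ∃ C : ℝ, ∀ x, ‖iteratedFDeriv ℝ n a x‖ ≤ C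

/-- `a ∈ S_dil(ℝ^d)` : `a ∈ C_b^∞` and `(x·∇)^n a ∈ L^∞` for all `n`. -/
def MemSdil (d : ℕ) (a : Ed d → ℝ) : Prop :=
  CbSmooth d a ∧ ∀ n : ℕ, ∃ C : ℝ, ∀ x, |(xdotOp d)^[n] a x| ≤ C

/-- Complex-valued version of `S_dil(ℝ^d)`. -/
def MemSdilC (d : ℕ) (a : Ed d → ℂ) : Prop :=
  (ContDiff ℝ (⊤ : ℕ∞) a ∧ ∀ n : ℕ, ∃ C : ℝ, ∀ x, ‖iteratedFDeriv ℝ n a x‖ ≤ C) ∧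
  ∀ n : ℕ, ∃ C : ℝ, ∀ x, ‖(xdotC d)^[n] a x‖ ≤ C

/-- The coefficient matrix is symmetric with real entries. -/
def SymmetricCoef (d : ℕ) (G : Ed d → Fin d → Fin d → ℝ) : Prop := ∀ x j k, G x j k = G x k j

/-- Uniform ellipticity: `Λ₊ ≥ G(x) ≥ Λ₋ > 0` as quadratic forms. -/
def UniformlyElliptic (d : ℕ) (G : Ed d → Fin d → Fin d → ℝ) : Prop :=
  ∃ lam Lam : ℝ, 0 < lam ∧ ∀ (x : Ed d) (v : Fin d → ℝ),
    lam * ∑ j, v j ^ 2 ≤ (∑ j, ∑ k, G x j k * v j * v k) ∧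
      (∑ j, ∑ k, G x j k * v j * v k) ≤ Lam * ∑ j, v j ^ 2

/-- The standing assumptions of the paper: `G` symmetric with entries in `C_b^∞`,
uniformly elliptic. -/
def Standing (d : ℕ) (G : Ed d → Fin d → Fin d → ℝ) : Prop :=
  (∀ j k, CbSmooth d fun x => G x j k) ∧ SymmetricCoef d G ∧ UniformlyElliptic d G

/-- `G = I_d + H`. -/
def Gmat (d : ℕ) (H : Ed d → Fin d → Fin d → ℝ) : Ed d → Fin d → Fin d → ℝ :=
  fun x j k => (if j = k then 1 else 0) + H x j k

/-- Long range condition `|∂^α (G - I_d)| ≤ C_α ⟨x⟩^{-μ-|α|}`. -/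
def LongRange (d : ℕ) (G : Ed d → Fin d → Fin d → ℝ) (μ : ℝ) : Prop :=
  ∀ (j k : Fin d) (n : ℕ), ∃ C : ℝ, ∀ x : Ed d,
    ‖iteratedFDeriv ℝ n (fun y => G y j k - if j = k then (1:ℝ) else 0) x‖
      ≤ C * ((1 + ‖x‖ ^ 2) ^ (-(μ + n) / 2) : ℝ)

/-- `R` is the resolvent `(P - z)⁻¹` of the self-adjoint realization of
`P = - div (G ∇·)`: for every `f ∈ L²`, `g = R f` solves `(P - z) g = f` in the sense
of distributions (this characterizes the resolvent uniquely). -/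
def IsWeakResolvent (d : ℕ) (G : Ed d → Fin d → Fin d → ℝ) (z : ℂ)
    (R : L2 d →L[ℂ] L2 d) : Prop :=
  ∀ (f : L2 d) (φ : SchwartzMap (Ed d) ℂ),
    (∫ x, (R f) x * divGrad d G (⇑φ) x) - z * (∫ x, (R f) x * φ x) = ∫ x, f x * φ x

/-- The japanese bracket weight `⟨x⟩^s = (1+|x|²)^{s/2}`. -/
def jweight (d : ℕ) (s : ℝ) : Ed d → ℝ := fun x => (1 + ‖x‖ ^ 2) ^ (s / 2)

/-- The dilation group `(e^{itA} u)(x) = e^{td/2} u(e^t x)`, where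
`A = (x·∇ + ∇·x)/(2i)` is the generator of dilations. -/
def dil (d : ℕ) (t : ℝ) (u : Ed d → ℂ) : Ed d → ℂ :=
  fun x => (Real.exp (t * d / 2) : ℂ) * u (Real.exp t • x)

/-- The `L²` inner product of two functions (conjugate linear in the first variable,
as is Mathlib's convention). -/
def pairL2 (d : ℕ) (u v : Ed d → ℂ) : ℂ := ∫ x : Ed d, (starRingEnd ℂ) (u x) * v x

/-- The resolvent `(hA - z)⁻¹ = (1/i) ∫₀^{±∞} e^{-itz} e^{ithA} dt` (`± Im z < 0`) of the
(rescaled) generator of dilations, realized by its defining integral formula. -/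
def resDil (d : ℕ) (h : ℝ) (z : ℂ) (u : Ed d → ℂ) : Ed d → ℂ := fun x =>
  if z.im < 0 then
    Complex.I⁻¹ * ∫ t in Set.Ici (0:ℝ), Complex.exp (-(Complex.I * t * z)) * dil d (t * h) u x
  else
    -Complex.I⁻¹ * ∫ t in Set.Iic (0:ℝ), Complex.exp (-(Complex.I * t * z)) * dil d (t * h) u x

/-- `sin(τ A) u = (e^{iτA} - e^{-iτA}) u / (2i)`. -/
def sinA (d : ℕ) (τ : ℝ) (u : Ed d → ℂ) : Ed d → ℂ :=
  fun x => (dil d τ u x - dil d (-τ) u x) / (2 * Complex.I)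

/-- `F(hA) = arctan(hA)` realized through `arctan λ = ∫₀^∞ sin(tλ) e^{-t} dt / t`. -/
def arctanA (d : ℕ) (h : ℝ) (u : Ed d → ℂ) : Ed d → ℂ :=
  fun x => ∫ t in Set.Ioi (0:ℝ), ((Real.exp (-t) / t : ℝ) : ℂ) * sinA d (t * h) u x

/-- Coefficients of the commutator `i[P,A] = ∑ D_j (2G_{jk} - x·∇G_{jk}) D_k`. -/
def commCoef (d : ℕ) (G : Ed d → Fin d → Fin d → ℝ) : Ed d → Fin d → Fin d → ℝ :=
  fun x j k => 2 * G x j k - xdotOp d (fun y => G y j k) x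

/-- `P_τ = e^{-iτA} (i[P,A]) e^{iτA}` applied to a function. -/
def ptauFun (d : ℕ) (G : Ed d → Fin d → Fin d → ℝ) (τ : ℝ) (u : Ed d → ℂ) : Ed d → ℂ :=
  dil d (-τ) (divGrad d (commCoef d G) (dil d τ u))

/-- Coefficients of `P_τ = e^{-iτA} (i[P,A]) e^{iτA}` for `P = -div((I+H)∇)`;
indeed `e^{-iτA} (∑ D_j b D_k) e^{iτA} = e^{2τ} ∑ D_j b(e^{-τ}x) D_k`. -/
def ptauCoef (d : ℕ) (H : Ed d → Fin d → Fin d → ℝ) (τ : ℝ) : Ed d → Fin d → Fin d → ℝ :=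
  fun x j k => Real.exp (2 * τ) * commCoef d (Gmat d H) (Real.exp (-τ) • x) j k

/-- Coefficients of `Q_s = ∫₀¹ (d P_τ / dτ)|_{τ=σs} dσ`. -/
def qCoef (d : ℕ) (H : Ed d → Fin d → Fin d → ℝ) (s : ℝ) : Ed d → Fin d → Fin d → ℝ :=
  fun x j k => ∫ σ in (0:ℝ)..(1:ℝ), deriv (fun τ => ptauCoef d H τ x j k) (σ * s)

/-- Coefficients of `B_τ = τ ∫₀¹ s Q_{sτ} ds`. -/
def bCoef (d : ℕ) (H : Ed d → Fin d → Fin d → ℝ) (τ : ℝ) : Ed d → Fin d → Fin d → ℝ :=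
  fun x j k => τ * ∫ s in (0:ℝ)..(1:ℝ), s * qCoef d H (s * τ) x j k

/-- The Fourier multiplier `|D|` (with symbol `|ξ|`). -/
def absD (d : ℕ) (u : Ed d → ℂ) : Ed d → ℂ :=
  fun x => 𝓕⁻ (fun ξ : Ed d => (‖ξ‖ : ℂ) * 𝓕 u ξ) x

/-- `‖ |D| w ‖_{L²}`, computed on the Fourier side (Plancherel). -/
def Dnorm (d : ℕ) (w : Ed d → ℂ) : ℝ :=
  (eLpNorm (fun ξ : Ed d => (‖ξ‖ : ℂ) * 𝓕 w ξ) 2 volume).toReal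

/-- A general Fourier multiplier `ρ(D)`. -/
def multD (d : ℕ) (ρ : Ed d → ℂ) (u : Ed d → ℂ) : Ed d → ℂ :=
  fun x => 𝓕⁻ (fun ξ : Ed d => ρ ξ * 𝓕 u ξ) x

/-- The operator `A = (x·∇ + ∇·x)/(2i) = (x·∇ + d/2)/i` applied to a function. -/
def opA (d : ℕ) (u : Ed d → ℂ) : Ed d → ℂ :=
  fun x => (fderiv ℝ u x x + (d / 2 : ℂ) * u x) / Complex.I

/-- The functions `F_ν(λ) = ∫₀^∞ sin(tλ) t/(t²+ν²) e^{-t} dt` approximating `arctan`. -/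
def Fnu (ν lam : ℝ) : ℝ :=
  ∫ t in Set.Ioi (0:ℝ), Real.sin (t * lam) * (t / (t ^ 2 + ν ^ 2)) * Real.exp (-t)

/-- `m`-admissible family in `S_dil(ℝ^d)`:
`‖∂_τ^k (x·∇)^n b_τ‖_{L^∞} ≤ C_{kn} e^{m|τ|}` for all `k, n`. -/
def AdmissibleCoeff (d : ℕ) (m : ℕ) (b : ℝ → Ed d → ℂ) : Prop :=
  (∀ τ, MemSdilC d (b τ)) ∧
  (∀ (n : ℕ) (x : Ed d), ContDiff ℝ (⊤ : ℕ∞) fun τ => (xdotC d)^[n] (b τ) x) ∧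
  ∀ k n : ℕ, ∃ C : ℝ, ∀ (τ : ℝ) (x : Ed d),
    ‖iteratedDeriv k (fun σ => (xdotC d)^[n] (b σ) x) τ‖ ≤ C * Real.exp (m * |τ|)

/-- `m`-admissible family of differential operators `B_τ = ∑ D_j b_{jk,τ} D_k`. -/
def AdmissibleOp (d : ℕ) (m : ℕ) (B : ℝ → Ed d → Fin d → Fin d → ℂ) : Prop :=
  ∀ j k, AdmissibleCoeff d m fun τ x => B τ x j k

/-- Functions that are continuous and bounded on `[0,∞)` (the spectrum of `P`). -/
def GoodSymbol (φ : ℝ → ℂ) : Prop :=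
  Continuous φ ∧ ∃ C : ℝ, ∀ lam : ℝ, 0 ≤ lam → ‖φ lam‖ ≤ C

/-- The (continuous bounded) functional calculus `φ ↦ φ(P)` of the nonnegative
self-adjoint operator `P = -div(G∇)`, characterized by: it is linear and
multiplicative on continuous functions bounded on `[0,∞) ⊇ spec(P)`, compatible with
sup-norm bounds and adjoints, only depends on the restriction of the symbol to
`[0,∞)`, and sends `λ ↦ (λ - z)⁻¹` to the resolvent `(P - z)⁻¹`.  These properties
determine `φ(P)` uniquely for every `φ` continuous and vanishing at infinity.
Moreover `0` is not an eigenvalue of `P` (field `ker_triv`). -/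
structure SpectralCalc (d : ℕ) (G : Ed d → Fin d → Fin d → ℝ) where
  map : (ℝ → ℂ) → (L2 d →L[ℂ] L2 d)
  map_congr : ∀ φ ψ, GoodSymbol φ → GoodSymbol ψ →
    (∀ lam : ℝ, 0 ≤ lam → φ lam = ψ lam) → map φ = map ψ
  map_add : ∀ φ ψ, GoodSymbol φ → GoodSymbol ψ →
    map (fun lam => φ lam + ψ lam) = map φ + map ψ
  map_smul : ∀ (c : ℂ) φ, GoodSymbol φ → map (fun lam => c * φ lam) = c • map φ
  map_mul : ∀ φ ψ, GoodSymbol φ → GoodSymbol ψ →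
    map (fun lam => φ lam * ψ lam) = (map φ).comp (map ψ)
  map_norm : ∀ (φ) (C : ℝ), (∀ lam : ℝ, 0 ≤ lam → ‖φ lam‖ ≤ C) → ‖map φ‖ ≤ C
  map_star : ∀ φ, GoodSymbol φ →
    ContinuousLinearMap.adjoint (map φ) = map (fun lam => (starRingEnd ℂ) (φ lam))
  map_resolvent : ∀ z : ℂ, z.im ≠ 0 →
    IsWeakResolvent d G z (map fun lam => ((lam : ℂ) - z)⁻¹)
  ker_triv : ∀ f : L2 d,
    (∀ φ : SchwartzMap (Ed d) ℂ, (∫ x, f x * divGrad d G (⇑φ) x) = 0) → f = 0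

/-- `Rj = ∂_j P^{-1/2}` is the `j`-th Riesz transform of `P`, defined as the strong
limit `s-lim_n π^{-1/2} ∂_j ∫_{1/n}^n e^{-tP} dt/√t`; here `gn n` is the vector
integral `∫_{1/n}^n e^{-tP} f dt/√t` and `wn n` is its distributional `∂_j`
derivative. -/
def RieszOf (d : ℕ) (G : Ed d → Fin d → Fin d → ℝ) (S : SpectralCalc d G) (j : Fin d)
    (Rj : L2 d →L[ℂ] L2 d) : Prop :=
  ∀ (f : L2 d) (gn wn : ℕ → L2 d),
    (∀ n : ℕ, gn n = ∫ t in Set.Icc ((n : ℝ)⁻¹) (n : ℝ),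
        ((Real.sqrt t)⁻¹ : ℝ) • (S.map (fun lam => Complex.exp (-(t : ℂ) * ((max lam 0 : ℝ) : ℂ))) f)) →
    (∀ (n : ℕ) (φ : SchwartzMap (Ed d) ℂ),
        (∫ x, (wn n) x * φ x) = -∫ x, (gn n) x * pd d j (⇑φ) x) →
    Tendsto (fun n : ℕ => ((Real.sqrt Real.pi)⁻¹ : ℝ) • wn n) atTop (𝓝 (Rj f))


/-- Change of variables under dilation for lower integrals. -/
lemma lintegral_comp_exp_smul (d : ℕ) (τ : ℝ) {f : Ed d → ℝ≥0∞} (hf : Measurable f) :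
    ∫⁻ x, f (Real.exp τ • x) = ENNReal.ofReal (Real.exp (-(τ * d))) * ∫⁻ x, f x := by
  have h0 : Real.exp τ ≠ 0 := (Real.exp_pos τ).ne'
  have hm : Measurable (fun x : Ed d => Real.exp τ • x) := by fun_prop
  rw [← lintegral_map (g := fun x : Ed d => Real.exp τ • x) hf hm,
    Measure.map_addHaar_smul volume h0, lintegral_smul_measure, finrank_euclideanSpace_fin]
  congr 2
  rw [abs_of_pos (by positivity), ← Real.exp_nat_mul, ← Real.exp_neg, mul_comm]

lemma dil_measurable (d : ℕ) (τ : ℝ) {q : Ed d → ℂ} (hq : Measurable q) :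
    Measurable (dil d τ q) := by
  unfold dil
  exact measurable_const.mul (hq.comp (by fun_prop))

lemma dil_measurable_uncurry (d : ℕ) (η : ℝ) {q : Ed d → ℂ} (hq : Measurable q) :
    Measurable (fun z : ℝ × Ed d => dil d (z.1 * η) q z.2) := by
  unfold dil
  refine Measurable.mul ?_ (hq.comp ?_)
  · fun_prop
  · fun_prop

lemma enorm_dil (d : ℕ) (τ : ℝ) (q : Ed d → ℂ) (x : Ed d) :
    ‖dil d τ q x‖ₑ = ENNReal.ofReal (Real.exp (τ * d / 2)) * ‖q (Real.exp τ • x)‖ₑ := by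
  unfold dil
  rw [enorm_mul, ← ofReal_norm (Real.exp _ : ℂ), Complex.norm_real, Real.norm_eq_abs,
    abs_of_pos (Real.exp_pos _)]

lemma lintegral_dil (d : ℕ) (τ : ℝ) {q : Ed d → ℂ} (hq : Measurable q) :
    ∫⁻ x, ‖dil d τ q x‖ₑ = ENNReal.ofReal (Real.exp (-(τ * d / 2))) * ∫⁻ x, ‖q x‖ₑ := by
  simp_rw [enorm_dil]
  rw [lintegral_const_mul' _ _ ENNReal.ofReal_ne_top,
    lintegral_comp_exp_smul d τ hq.enorm, ← mul_assoc, ← ENNReal.ofReal_mul (by positivity),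
    ← Real.exp_add]
  congr 3; ring

lemma lintegral_dil_sq (d : ℕ) (τ : ℝ) {q : Ed d → ℂ} (hq : Measurable q) :
    ∫⁻ x, ‖dil d τ q x‖ₑ ^ (2:ℝ) = ∫⁻ x, ‖q x‖ₑ ^ (2:ℝ) := by
  simp_rw [enorm_dil, ENNReal.mul_rpow_of_nonneg _ _ (show (0:ℝ) ≤ 2 by norm_num)]
  rw [lintegral_const_mul' _ _ (by finiteness),
    lintegral_comp_exp_smul d τ (hq.enorm.pow_const (2:ℝ)), ← mul_assoc,
    ENNReal.ofReal_rpow_of_pos (Real.exp_pos _), ← ENNReal.ofReal_mul (by positivity),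
    ← Real.exp_mul, ← Real.exp_add]
  ring_nf
  simp

lemma eLpNorm_two (d : ℕ) (q : Ed d → ℂ) :
    eLpNorm q 2 volume = (∫⁻ x, ‖q x‖ₑ ^ (2:ℝ)) ^ (1/2:ℝ) := by
  rw [eLpNorm_eq_lintegral_rpow_enorm_toReal (by norm_num) (by norm_num)]
  simp

lemma eLpNorm_dil (d : ℕ) (τ : ℝ) {q : Ed d → ℂ} (hq : Measurable q) :
    eLpNorm (dil d τ q) 2 volume = eLpNorm q 2 volume := by
  rw [eLpNorm_two, eLpNorm_two, lintegral_dil_sq d τ hq]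

/-- Schur type bound. -/
lemma schur_bound (d : ℕ) (S : Set ℝ) (hS : MeasurableSet S) (m : ℝ → Ed d → ℂ)
    (hm : Measurable (fun z : ℝ × Ed d => m z.1 z.2)) (μ : ℝ → ℝ)
    (hb : ∀ t ∈ S, ∀ x, ‖m t x‖ ≤ μ t) (p q : Ed d → ℂ) (hp : Measurable p) (hq : Measurable q)
    (hp2 : eLpNorm p 2 volume ≠ ∞) (hq2 : eLpNorm q 2 volume ≠ ∞)
    (η : ℝ) :
    ∫⁻ z : ℝ × Ed d, ‖m z.1 z.2 * (p z.2 * dil d (z.1 * η) q z.2)‖ₑ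
        ∂((volume.restrict S).prod volume)
      ≤ (∫⁻ t in S, ENNReal.ofReal (μ t)) * (eLpNorm p 2 volume * eLpNorm q 2 volume) := by
  have hd := dil_measurable_uncurry d η hq
  rw [lintegral_prod]
  · rw [← lintegral_mul_const' _ _ (ENNReal.mul_ne_top hp2 hq2)]
    refine setLIntegral_mono_ae' hS (ae_of_all _ fun t ht => ?_)
    calc ∫⁻ x : Ed d, ‖m t x * (p x * dil d (t * η) q x)‖ₑ
        ≤ ∫⁻ x : Ed d, ENNReal.ofReal (μ t) * (‖p x‖ₑ * ‖dil d (t * η) q x‖ₑ) := by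
          refine lintegral_mono fun x => ?_
          rw [enorm_mul, enorm_mul]
          gcongr
          rw [← ofReal_norm]
          exact ENNReal.ofReal_le_ofReal (hb t ht x)
      _ = ENNReal.ofReal (μ t) * ∫⁻ x : Ed d, (‖p x‖ₑ * ‖dil d (t * η) q x‖ₑ) :=
          lintegral_const_mul' _ _ ENNReal.ofReal_ne_top
      _ ≤ _ := by
          gcongr
          rw [← eLpNorm_dil d (t * η) hq, eLpNorm_two, eLpNorm_two]
          exact ENNReal.lintegral_mul_le_Lp_mul_Lq volume Real.HolderConjugate.two_two
            hp.enorm.aemeasurable (dil_measurable d _ hq).enorm.aemeasurable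
  · exact (hm.mul ((hp.comp measurable_snd).mul hd)).enorm.aemeasurable

lemma schur_integrable (d : ℕ) (S : Set ℝ) (hS : MeasurableSet S) (m : ℝ → Ed d → ℂ)
    (hm : Measurable (fun z : ℝ × Ed d => m z.1 z.2)) (μ : ℝ → ℝ)
    (hμ : IntegrableOn μ S)
    (hb : ∀ t ∈ S, ∀ x, ‖m t x‖ ≤ μ t) (p q : Ed d → ℂ) (hp : Measurable p) (hq : Measurable q)
    (hp2 : eLpNorm p 2 volume ≠ ∞) (hq2 : eLpNorm q 2 volume ≠ ∞)
    (η : ℝ) :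
    Integrable (fun z : ℝ × Ed d => m z.1 z.2 * (p z.2 * dil d (z.1 * η) q z.2))
      ((volume.restrict S).prod volume) := by
  have hd := dil_measurable_uncurry d η hq
  refine ⟨(hm.mul ((hp.comp measurable_snd).mul hd)).aestronglyMeasurable, ?_⟩
  refine (schur_bound d S hS m hm μ hb p q hp hq hp2 hq2 η).trans_lt ?_
  refine ENNReal.mul_lt_top ?_ (ENNReal.mul_lt_top hp2.lt_top hq2.lt_top)
  exact hμ.lintegral_lt_top

lemma schur_norm (d : ℕ) (S : Set ℝ) (hS : MeasurableSet S) (m : ℝ → Ed d → ℂ)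
    (hm : Measurable (fun z : ℝ × Ed d => m z.1 z.2)) (μ : ℝ → ℝ)
    (hμ : IntegrableOn μ S) (hμ0 : ∀ t, 0 ≤ μ t)
    (hb : ∀ t ∈ S, ∀ x, ‖m t x‖ ≤ μ t) (p q : Ed d → ℂ) (hp : Measurable p) (hq : Measurable q)
    (hp2 : eLpNorm p 2 volume ≠ ∞) (hq2 : eLpNorm q 2 volume ≠ ∞)
    (η : ℝ) :
    ‖∫ z : ℝ × Ed d, m z.1 z.2 * (p z.2 * dil d (z.1 * η) q z.2)
      ∂((volume.restrict S).prod volume)‖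
      ≤ (∫ t in S, μ t) * ((eLpNorm p 2 volume).toReal * (eLpNorm q 2 volume).toReal) := by
  have h1 := schur_bound d S hS m hm μ hb p q hp hq hp2 hq2 η
  have hlt : (∫⁻ t in S, ENNReal.ofReal (μ t)) * (eLpNorm p 2 volume * eLpNorm q 2 volume) ≠ ∞ :=
    ENNReal.mul_ne_top hμ.lintegral_lt_top.ne (ENNReal.mul_ne_top hp2 hq2)
  refine (norm_integral_le_lintegral_norm _).trans ?_
  simp_rw [ofReal_norm]
  refine (ENNReal.toReal_mono hlt h1).trans_eq ?_
  rw [ENNReal.toReal_mul, ENNReal.toReal_mul,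
    integral_eq_lintegral_of_nonneg_ae (ae_of_all _ hμ0) hμ.aestronglyMeasurable]

/-- The resolvent like integral. -/
def Vd (d : ℕ) (h c : ℝ) (F : Ed d → ℂ) : Ed d → ℂ := fun x =>
  ∫ s in Set.Ioi (0:ℝ), (Real.exp (-(c * s)) : ℂ) * dil d (s * h) F x

lemma Vd_kernel_measurable (d : ℕ) (h c : ℝ) {F : Ed d → ℂ} (hF : Measurable F) :
    Measurable (fun z : ℝ × Ed d => (Real.exp (-(c * z.1)) : ℂ) * dil d (z.1 * h) F z.2) :=
  Measurable.mul (by fun_prop) (dil_measurable_uncurry d h hF)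

lemma Vd_measurable (d : ℕ) (h c : ℝ) {F : Ed d → ℂ} (hF : Measurable F) :
    Measurable (Vd d h c F) := by
  have := (Vd_kernel_measurable d h c hF).comp measurable_swap
  exact (this.stronglyMeasurable.integral_prod_right' (ν := volume.restrict (Set.Ioi 0))).measurable

lemma enorm_exp_real (a : ℝ) : ‖(Real.exp a : ℂ)‖ₑ = ENNReal.ofReal (Real.exp a) := by
  rw [← ofReal_norm, Complex.norm_real, Real.norm_eq_abs, abs_of_pos (Real.exp_pos _)]

lemma integrableOn_exp_neg {c : ℝ} (hc : 0 < c) :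
    IntegrableOn (fun s : ℝ => Real.exp (-(c * s))) (Set.Ioi 0) := by
  have := integrableOn_exp_mul_Ioi (a := -c) (by linarith) 0
  simpa [neg_mul] using this

lemma Vd_kernel_integrable (d : ℕ) {h c : ℝ} (hh : 0 ≤ h) (hc : 0 < c) {F : Ed d → ℂ}
    (hF : Measurable F) (hF1 : Integrable F) :
    Integrable (fun z : ℝ × Ed d => (Real.exp (-(c * z.1)) : ℂ) * dil d (z.1 * h) F z.2)
      ((volume.restrict (Set.Ioi 0)).prod volume) := by
  refine ⟨(Vd_kernel_measurable d h c hF).aestronglyMeasurable, ?_⟩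
  rw [HasFiniteIntegral, lintegral_prod _ (Vd_kernel_measurable d h c hF).enorm.aemeasurable]
  have : ∫⁻ s in Set.Ioi (0:ℝ), ENNReal.ofReal (Real.exp (-(c * s))) * ∫⁻ x, ‖F x‖ₑ < ∞ := by
    rw [lintegral_mul_const' _ _ hF1.2.ne]
    exact ENNReal.mul_lt_top (integrableOn_exp_neg hc).lintegral_lt_top hF1.2
  refine lt_of_le_of_lt (setLIntegral_mono_ae' measurableSet_Ioi (ae_of_all _ fun s hs => ?_)) this
  simp_rw [enorm_mul, enorm_exp_real]
  rw [lintegral_const_mul' _ _ ENNReal.ofReal_ne_top, lintegral_dil d _ hF]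
  gcongr
  refine mul_le_of_le_one_left (by positivity) ?_
  rw [ENNReal.ofReal_le_one]
  apply Real.exp_le_one_iff.2
  have : (0:ℝ) ≤ s := le_of_lt hs
  have : 0 ≤ s * h * d / 2 := by positivity
  linarith

lemma Vd_integrable (d : ℕ) {h c : ℝ} (hh : 0 ≤ h) (hc : 0 < c) {F : Ed d → ℂ}
    (hF : Measurable F) (hF1 : Integrable F) : Integrable (Vd d h c F) :=
  (Vd_kernel_integrable d hh hc hF hF1).integral_prod_right

lemma Vd_ae (d : ℕ) {h c : ℝ} (hh : 0 ≤ h) (hc : 0 < c) {F : Ed d → ℂ}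
    (hF : Measurable F) (hF1 : Integrable F) : ∀ᵐ x : Ed d,
    IntegrableOn (fun s : ℝ => (Real.exp (-(c * s)) : ℂ) * dil d (s * h) F x) (Set.Ioi 0) :=
  (Vd_kernel_integrable d hh hc hF hF1).prod_left_ae

lemma Vd_L2 (d : ℕ) {h c : ℝ} (hc : 0 < c) {F : Ed d → ℂ}
    (hF : Measurable F) (hF2 : eLpNorm F 2 volume ≠ ∞) : eLpNorm (Vd d h c F) 2 volume ≠ ∞ := by
  set I : ℝ≥0∞ := ∫⁻ s in Set.Ioi (0:ℝ), ENNReal.ofReal (Real.exp (-(c * s))) with hI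
  have hIfin : I ≠ ∞ := (integrableOn_exp_neg hc).lintegral_lt_top.ne
  have hN : ∫⁻ x, ‖F x‖ₑ ^ (2:ℝ) ≠ ∞ := by
    intro h
    rw [eLpNorm_two, h] at hF2
    simp at hF2
  have hk := Vd_kernel_measurable d h c hF
  have hdm := dil_measurable_uncurry d h hF
  have key : ∫⁻ x, ‖Vd d h c F x‖ₑ ^ (2:ℝ) ≤ I * (I * ∫⁻ x, ‖F x‖ₑ ^ (2:ℝ)) := by
    calc ∫⁻ x, ‖Vd d h c F x‖ₑ ^ (2:ℝ)
        ≤ ∫⁻ x, I * ∫⁻ s in Set.Ioi (0:ℝ), ENNReal.ofReal (Real.exp (-(c * s))) *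
            ‖dil d (s * h) F x‖ₑ ^ (2:ℝ) := by
          refine lintegral_mono fun x => ?_
          have h1 : ‖Vd d h c F x‖ₑ ≤ ∫⁻ s in Set.Ioi (0:ℝ),
              ENNReal.ofReal (Real.exp (-(c * s))) ^ (1/2:ℝ) *
              (ENNReal.ofReal (Real.exp (-(c * s))) ^ (1/2:ℝ) * ‖dil d (s * h) F x‖ₑ) := by
            refine (enorm_integral_le_lintegral_enorm _).trans_eq (lintegral_congr fun s => ?_)
            rw [enorm_mul, enorm_exp_real, ← mul_assoc, ← ENNReal.rpow_add_of_nonneg _ _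
              (by norm_num) (by norm_num)]
            norm_num
          have h2 := ENNReal.lintegral_mul_le_Lp_mul_Lq (volume.restrict (Set.Ioi (0:ℝ)))
            Real.HolderConjugate.two_two
            (f := fun s => ENNReal.ofReal (Real.exp (-(c * s))) ^ (1/2:ℝ))
            (g := fun s => ENNReal.ofReal (Real.exp (-(c * s))) ^ (1/2:ℝ) * ‖dil d (s * h) F x‖ₑ)
            (by fun_prop)
            (Measurable.aemeasurable (Measurable.mul (by fun_prop)
              (hdm.comp measurable_prodMk_right).enorm))
          have h3 := h1.trans h2
          have h4 := ENNReal.rpow_le_rpow h3 (show (0:ℝ) ≤ 2 by norm_num)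
          refine h4.trans_eq ?_
          rw [ENNReal.mul_rpow_of_nonneg _ _ (by norm_num), ← ENNReal.rpow_mul,
            ← ENNReal.rpow_mul]
          norm_num only [one_div, ENNReal.rpow_one]
          congr 1
          · refine lintegral_congr fun s => ?_
            rw [← ENNReal.rpow_mul]; norm_num
          · refine lintegral_congr fun s => ?_
            rw [ENNReal.mul_rpow_of_nonneg _ _ (by norm_num), ← ENNReal.rpow_mul]; norm_num
      _ = I * ∫⁻ s in Set.Ioi (0:ℝ), ∫⁻ x, ENNReal.ofReal (Real.exp (-(c * s))) *
            ‖dil d (s * h) F x‖ₑ ^ (2:ℝ) := by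
          rw [lintegral_const_mul' _ _ hIfin, lintegral_lintegral_swap]
          refine Measurable.aemeasurable ?_
          refine Measurable.mul (by fun_prop) ?_
          exact ((hdm.comp measurable_swap).enorm.pow_const _)
      _ = I * (I * ∫⁻ x, ‖F x‖ₑ ^ (2:ℝ)) := by
          congr 1
          rw [← lintegral_mul_const' _ _ hN]
          refine lintegral_congr fun s => ?_
          rw [lintegral_const_mul' _ _ ENNReal.ofReal_ne_top, lintegral_dil_sq d _ hF]
  rw [eLpNorm_two]
  refine ENNReal.rpow_ne_top_of_nonneg (by norm_num) (ne_top_of_le_ne_top ?_ key)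
  exact ENNReal.mul_ne_top hIfin (ENNReal.mul_ne_top hIfin hN)

/-- The differential equation along dilation orbits. -/
lemma Vd_hasDerivAt (d : ℕ) (h c : ℝ) {F : Ed d → ℂ} (hF : Continuous F) (y : Ed d)
    (hy : IntegrableOn (fun s : ℝ => (Real.exp (-(c * s)) : ℂ) * dil d (s * h) F y) (Set.Ioi 0))
    (t : ℝ) :
    HasDerivAt (fun t => dil d (t * h) (Vd d h c F) y)
      (c * dil d (t * h) (Vd d h c F) y - dil d (t * h) F y) t := by
  set ψ : ℝ → ℂ := fun s : ℝ => (Real.exp (-(c * s)) : ℂ) * dil d (s * h) F y with hψ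
  have hψc : Continuous ψ := by
    rw [hψ]; unfold dil; fun_prop
  have hdd : ∀ t s : ℝ, (Real.exp (t * h * d / 2) : ℂ) * dil d (s * h) F (Real.exp (t * h) • y)
      = dil d ((s + t) * h) F y := by
    intro t s
    unfold dil
    rw [smul_smul, ← Real.exp_add, ← mul_assoc, ← Complex.ofReal_mul, ← Real.exp_add]
    congr 3
    · ring_nf
    · ring_nf
  have hform : ∀ t : ℝ, dil d (t * h) (Vd d h c F) y
      = (Real.exp (c * t) : ℂ) * ((∫ s in Set.Ioi 0, ψ s) - ∫ s in (0:ℝ)..t, ψ s) := by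
    intro t
    have e1 : dil d (t * h) (Vd d h c F) y
        = (Real.exp (c * t) : ℂ) * ∫ s in Set.Ioi (0:ℝ), ψ (s + t) := by
      rw [dil, Vd, ← integral_const_mul, ← integral_const_mul]
      refine integral_congr_ae (ae_of_all _ fun s => ?_)
      simp only [hψ]
      rw [← hdd t s, mul_left_comm, ← mul_assoc (Real.exp (c * t) : ℂ), ← Complex.ofReal_mul (Real.exp (c * t)),
        ← Real.exp_add]
      congr 3; ring
    have e2 : ∫ s in Set.Ioi (0:ℝ), ψ (s + t) = ∫ s in Set.Ioi t, ψ s := by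
      have := MeasurePreserving.setIntegral_preimage_emb (measurePreserving_add_right volume t)
        (measurableEmbedding_addRight t) ψ (Set.Ioi t)
      rw [← this]; simp
    have e3 : (∫ s in (0:ℝ)..t, ψ s) + ∫ s in Set.Ioi t, ψ s = ∫ s in Set.Ioi 0, ψ s :=
      intervalIntegral.integral_interval_add_Ioi' (hψc.intervalIntegrable _ _) (by
        refine (hy.union (hψc.integrableOn_Icc (a := t) (b := 0))).mono_set fun s hs => ?_
        rcases lt_or_ge 0 s with h0 | h0
        · exact Or.inl h0
        · exact Or.inr ⟨le_of_lt hs, h0⟩)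
    rw [e1, e2, ← e3]; ring
  have hd1 : HasDerivAt (fun t : ℝ => (Real.exp (c * t) : ℂ)) ((c * Real.exp (c * t) : ℝ) : ℂ) t := by
    have : HasDerivAt (fun t : ℝ => Real.exp (c * t)) (c * Real.exp (c * t)) t := by
      have := ((hasDerivAt_id t).const_mul c).exp
      simpa [mul_comm] using this
    exact this.ofReal_comp
  have hd2 : HasDerivAt (fun t : ℝ => (∫ s in Set.Ioi 0, ψ s) - ∫ s in (0:ℝ)..t, ψ s) (-ψ t) t := by
    have := intervalIntegral.integral_hasDerivAt_right (hψc.intervalIntegrable 0 t)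
      hψc.aestronglyMeasurable.stronglyMeasurableAtFilter hψc.continuousAt
    simpa using this.const_sub _
  have := hd1.mul hd2
  refine (this.congr_of_eventuallyEq (Eventually.of_forall hform)).congr_deriv ?_
  rw [hform t]
  have e : (Real.exp (c * t) : ℂ) * ψ t = dil d (t * h) F y := by
    simp only [hψ]
    rw [← mul_assoc, ← Complex.ofReal_mul, ← Real.exp_add]
    simp
  rw [← e]
  push_cast; ring


lemma halfline_zero (S : Set ℝ) (hS : S = Set.Ioi 0 ∨ S = Set.Iic 0) (f f' : ℝ → ℂ)
    (h0 : f 0 = 0) (hd : ∀ t, HasDerivAt f (f' t) t) (hf : IntegrableOn f S)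
    (hf' : IntegrableOn f' S) : ∫ t in S, f' t = 0 := by
  rcases hS with rfl | rfl
  · have ht := tendsto_zero_of_hasDerivAt_of_integrableOn_Ioi (fun x _ => hd x) hf' hf
    rw [integral_Ioi_of_hasDerivAt_of_tendsto' (fun x _ => hd x) hf' ht, h0, sub_zero]
  · have ht := tendsto_zero_of_hasDerivAt_of_integrableOn_Iic (a := 0) (fun x _ => hd x) hf' hf
    rw [integral_Iic_of_hasDerivAt_of_tendsto' (fun x _ => hd x) hf' ht, h0, sub_zero]

/-- Weights. -/
def kN (d : ℕ) (a b : Ed d → ℝ) (h t : ℝ) (x : Ed d) : ℝ :=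
  (Real.exp (2 * (t * h)) * a (Real.exp (t * (-h)) • x) - a x) / h - t * (2 * a x - b x)

def kN1 (d : ℕ) (a b : Ed d → ℝ) (h t : ℝ) (x : Ed d) : ℝ :=
  Real.exp (2 * (t * h)) * (2 * a (Real.exp (t * (-h)) • x) - b (Real.exp (t * (-h)) • x))
    - (2 * a x - b x)

def kM (d : ℕ) (a b : Ed d → ℝ) (h t : ℝ) (y : Ed d) : ℝ :=
  (Real.exp (2 * (t * h)) * a y - a (Real.exp (t * h) • y)) / h
    - t * (2 * a (Real.exp (t * h) • y) - b (Real.exp (t * h) • y))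

def kM1 (d : ℕ) (a b : Ed d → ℝ) (h t : ℝ) (y : Ed d) : ℝ :=
  Real.exp (2 * (t * h)) * (2 * a y - b y)
    - (2 * a (Real.exp (t * h) • y) - b (Real.exp (t * h) • y))

def kMd (d : ℕ) (a b e : Ed d → ℝ) (h t : ℝ) (y : Ed d) : ℝ :=
  2 * Real.exp (2 * (t * h)) * a y - 2 * a (Real.exp (t * h) • y)
    - t * h * (2 * b (Real.exp (t * h) • y) - e (Real.exp (t * h) • y))

def kM1d (d : ℕ) (a b e : Ed d → ℝ) (h t : ℝ) (y : Ed d) : ℝ :=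
  2 * h * Real.exp (2 * (t * h)) * (2 * a y - b y)
    - h * (2 * b (Real.exp (t * h) • y) - e (Real.exp (t * h) • y))

def kW0 (d : ℕ) (a b : Ed d → ℝ) (ε h t : ℝ) (x : Ed d) : ℝ :=
  Real.exp (-((ε + h) * t)) * kN d a b h t x

def kW1 (d : ℕ) (a b : Ed d → ℝ) (ε h t : ℝ) (x : Ed d) : ℝ :=
  Real.exp (-((ε + h) * t)) * ((1 + ε) * kN d a b h t x - kN1 d a b h t x)

def kW2 (d : ℕ) (a b : Ed d → ℝ) (ε h t : ℝ) (x : Ed d) : ℝ :=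
  Real.exp (-((ε + h) * t)) * ((1 + ε) * kM d a b h t x - kM1 d a b h t x)

def kW3 (d : ℕ) (a b e : Ed d → ℝ) (ε h t : ℝ) (x : Ed d) : ℝ :=
  Real.exp (-((ε + h) * t)) * (-(2 * h * (1 + ε) * kM d a b h t x)
    - (1 - ε - 2 * h) * kM1 d a b h t x + (1 + ε) * kMd d a b e h t x - kM1d d a b e h t x)

section
variable {d : ℕ} {a b e : Ed d → ℝ} {ε h : ℝ}

lemma hasDerivAt_lin (h t : ℝ) (f f' : ℝ → ℝ) (hf : ∀ τ, HasDerivAt f (f' τ) τ) :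
    HasDerivAt (fun t => f (t * h)) (f' (t * h) * h) t := by
  have h1 : HasDerivAt (fun t : ℝ => t * h) h t := by simpa using (hasDerivAt_id t).mul_const h
  exact (hf (t * h)).comp t h1

lemma hasDerivAt_exp2 (h t : ℝ) :
    HasDerivAt (fun t : ℝ => Real.exp (2 * (t * h))) (2 * h * Real.exp (2 * (t * h))) t := by
  have h1 : HasDerivAt (fun t : ℝ => 2 * (t * h)) (2 * h) t := by
    simpa using ((hasDerivAt_id t).mul_const h).const_mul 2
  simpa [mul_comm] using h1.exp

lemma hasDerivAt_expW (ε h t : ℝ) :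
    HasDerivAt (fun t : ℝ => Real.exp (-((ε + h) * t)))
      (-(ε + h) * Real.exp (-((ε + h) * t))) t := by
  have h1 : HasDerivAt (fun t : ℝ => -(ε + h) * t) (-(ε + h)) t := by
    simpa using (hasDerivAt_id t).const_mul (-(ε + h))
  simp only [← neg_mul]
  simpa [mul_comm] using h1.exp

lemma kW0_deriv (hh : h ≠ 0)
    (hab : ∀ x τ, HasDerivAt (fun τ => a (Real.exp τ • x)) (b (Real.exp τ • x)) τ)
    (t : ℝ) (x : Ed d) :
    HasDerivAt (fun t => kW0 d a b ε h t x) ((1 - h) * kW0 d a b ε h t x - kW1 d a b ε h t x) t := by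
  have h1 := hasDerivAt_lin (-h) t _ _ (hab x)
  have h2 := (((((hasDerivAt_exp2 h t).mul h1).sub_const (a x)).div_const h).sub
    ((hasDerivAt_id t).mul_const (2 * a x - b x)))
  have h3 := (hasDerivAt_expW ε h t).mul h2
  refine h3.congr_deriv ?_
  simp only [kW0, kW1, kN, kN1, Pi.mul_apply, Pi.sub_apply, id]
  field_simp
  ring

lemma kW2_deriv (hh : h ≠ 0) (hε : ε ^ 2 = 1)
    (hab : ∀ x τ, HasDerivAt (fun τ => a (Real.exp τ • x)) (b (Real.exp τ • x)) τ)
    (hbe : ∀ x τ, HasDerivAt (fun τ => b (Real.exp τ • x)) (e (Real.exp τ • x)) τ)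
    (t : ℝ) (x : Ed d) :
    HasDerivAt (fun t => kW2 d a b ε h t x) (kW3 d a b e ε h t x - (1 - h) * kW2 d a b ε h t x) t := by
  have h1 := hasDerivAt_lin h t _ _ (hab x)
  have h1' := hasDerivAt_lin h t _ _ (hbe x)
  have hc := (h1.const_mul 2).sub h1'
  have h2 := ((((hasDerivAt_exp2 h t).mul_const (a x)).sub h1).div_const h).sub
    ((hasDerivAt_id t).mul hc)
  have h4 := ((hasDerivAt_exp2 h t).mul_const (2 * a x - b x)).sub hc
  have h3 := (hasDerivAt_expW ε h t).mul ((h2.const_mul (1 + ε)).sub h4)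
  refine h3.congr_deriv ?_
  simp only [kW2, kW3, kM, kM1, kMd, kM1d, Pi.mul_apply, Pi.sub_apply, id]
  have : h * h⁻¹ = 1 := mul_inv_cancel₀ hh
  simp only [div_eq_mul_inv]
  generalize h⁻¹ = hi at this ⊢
  generalize Real.exp (-((ε + h) * t)) = E1
  generalize Real.exp (2 * (t * h)) = E2
  generalize a (Real.exp (t * h) • x) = A1
  generalize b (Real.exp (t * h) • x) = B1
  generalize e (Real.exp (t * h) • x) = C1
  linear_combination (1 + ε) * E1 * (2 * E2 * a x - B1) * this - E1 * ((E2 * a x - A1) * hi - t * (2 * A1 - B1)) * hε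

lemma kW2_eq (t : ℝ) (y : Ed d) :
    kW1 d a b ε h t (Real.exp (t * h) • y) = kW2 d a b ε h t y := by
  have : Real.exp (t * (-h)) • Real.exp (t * h) • y = y := by
    rw [smul_smul, ← Real.exp_add]; simp
  simp only [kW1, kW2, kN, kN1, kM, kM1, this]

lemma kW0_zero (x : Ed d) : kW0 d a b ε h 0 x = 0 := by simp [kW0, kN]
lemma kW2_zero (x : Ed d) : kW2 d a b ε h 0 x = 0 := by simp [kW2, kM, kM1]

lemma exp_factor (hh : 0 < h) (hh' : h < 1/4) (t : ℝ) (hε : ε * t = |t|) {X L : ℝ}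
    (hX : |X| ≤ L * (Real.exp (2 * (h * |t|)) * (1 + |t|))) :
    |Real.exp (-((ε + h) * t)) * X| ≤ 8 * L * Real.exp (-(1/8 * |t|)) := by
  rw [abs_mul, abs_of_pos (Real.exp_pos _)]
  have hL : 0 ≤ L := by
    by_contra hL
    have : L * (Real.exp (2 * (h * |t|)) * (1 + |t|)) < 0 :=
      mul_neg_of_neg_of_pos (not_le.1 hL) (by positivity)
    linarith [abs_nonneg X]
  have h1 : 1 + |t| ≤ 8 * Real.exp (1/8 * |t|) := by
    have := Real.add_one_le_exp (1/8 * |t|)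
    linarith [abs_nonneg t]
  have h2 : Real.exp (-((ε + h) * t)) * (Real.exp (2 * (h * |t|)) * Real.exp (1/8 * |t|))
      ≤ Real.exp (-(1/8 * |t|)) := by
    rw [← Real.exp_add, ← Real.exp_add, Real.exp_le_exp]
    have : -(h * t) ≤ h * |t| := by
      have := neg_abs_le t
      nlinarith
    have h3 : (3 * h) * |t| ≤ 3/4 * |t| := by
      have := abs_nonneg t
      nlinarith
    nlinarith
  calc _ ≤ Real.exp (-((ε + h) * t)) * (L * (Real.exp (2 * (h * |t|)) * (8 * Real.exp (1/8 * |t|)))) := by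
        refine mul_le_mul_of_nonneg_left (hX.trans ?_) (by positivity)
        gcongr
    _ = 8 * L * (Real.exp (-((ε + h) * t)) * (Real.exp (2 * (h * |t|)) * Real.exp (1/8 * |t|))) := by
        ring
    _ ≤ _ := by gcongr


lemma gen1 {E E2 K A A' A1 B1 t h : ℝ} (hE1 : 1 ≤ E) (hE2 : 0 ≤ E2) (hE : E2 ≤ E)
    (hh : 0 < h) (hh' : h < 1/4)
    (hA : |A| ≤ K) (hA' : |A'| ≤ K) (hA1 : |A1| ≤ K) (hB1 : |B1| ≤ K) :
    |E2 * A - A' - t * h * (2 * A1 - B1)| ≤ 3 * K * (E * (1 + |t|)) := by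
  have hK : 0 ≤ K := (abs_nonneg A).trans hA
  have h1 : |E2 * A| ≤ E * K := by
    rw [abs_mul, abs_of_nonneg hE2]; gcongr
  have h2 : |t * h * (2 * A1 - B1)| ≤ |t| * K := by
    rw [abs_mul, abs_mul, abs_of_pos hh, mul_assoc]
    refine mul_le_mul_of_nonneg_left ?_ (abs_nonneg t)
    have : |2 * A1 - B1| ≤ 3 * K := by
      rw [abs_le] at *; constructor <;> linarith
    nlinarith [abs_nonneg (2 * A1 - B1)]
  have h3 : K ≤ E * K := by nlinarith
  have h4 : |t| * K ≤ E * K * |t| := by nlinarith [abs_nonneg t, mul_nonneg (abs_nonneg t) hK]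
  have h5 : 0 ≤ E * K * |t| := by positivity
  have h6 : |E2 * A - A' - t * h * (2 * A1 - B1)| ≤ E * K + K + |t| * K := by
    rw [abs_le] at h1 hA' h2 ⊢; constructor <;> linarith
  nlinarith

lemma gen2 {E E2 K A B A' B' t : ℝ} (hE1 : 1 ≤ E) (hE2 : 0 ≤ E2) (hE : E2 ≤ E)
    (hA : |A| ≤ K) (hA' : |A'| ≤ K) (hB : |B| ≤ K) (hB' : |B'| ≤ K) :
    |E2 * (2 * A - B) - (2 * A' - B')| ≤ 6 * K * (E * (1 + |t|)) := by
  have hK : 0 ≤ K := (abs_nonneg A).trans hA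
  have h1 : |E2 * (2 * A - B)| ≤ E * (3 * K) := by
    rw [abs_mul, abs_of_nonneg hE2]
    have : |2 * A - B| ≤ 3 * K := by
      rw [abs_le] at *; constructor <;> linarith
    gcongr
  have h3 : K ≤ E * K := by nlinarith
  have h5 : 0 ≤ E * K * |t| := by positivity
  have h6 : |E2 * (2 * A - B) - (2 * A' - B')| ≤ E * (3 * K) + 3 * K := by
    rw [abs_le] at h1 hA' hB' ⊢; constructor <;> linarith
  nlinarith

lemma exp_th_le (h t : ℝ) (hh : 0 < h) : Real.exp (2 * (t * h)) ≤ Real.exp (2 * (h * |t|)) := by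
  rw [Real.exp_le_exp]
  nlinarith [le_abs_self t]

lemma one_le_expE (h t : ℝ) (hh : 0 < h) : 1 ≤ Real.exp (2 * (h * |t|)) := by
  rw [Real.one_le_exp_iff]; positivity

lemma kN_bound {K : ℝ} (hh : 0 < h) (hh' : h < 1/4) (ha : ∀ x, |a x| ≤ K) (hb : ∀ x, |b x| ≤ K)
    (t : ℝ) (x : Ed d) :
    |kN d a b h t x| ≤ 3 * K / h * (Real.exp (2 * (h * |t|)) * (1 + |t|)) := by
  have := gen1 (t := t) (one_le_expE h t hh) (Real.exp_pos (2 * (t * h))).le (exp_th_le h t hh) hh hh'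
    (ha (Real.exp (t * (-h)) • x)) (ha x) (ha x) (hb x)
  have e : kN d a b h t x = (Real.exp (2 * (t * h)) * a (Real.exp (t * (-h)) • x) - a x
    - t * h * (2 * a x - b x)) / h := by
    rw [kN]; field_simp
  rw [e, abs_div, abs_of_pos hh, div_mul_eq_mul_div]
  gcongr

lemma kM_bound {K : ℝ} (hh : 0 < h) (hh' : h < 1/4) (ha : ∀ x, |a x| ≤ K) (hb : ∀ x, |b x| ≤ K)
    (t : ℝ) (x : Ed d) :
    |h * kM d a b h t x| ≤ 3 * K * (Real.exp (2 * (h * |t|)) * (1 + |t|)) := by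
  have := gen1 (t := t) (one_le_expE h t hh) (Real.exp_pos (2 * (t * h))).le (exp_th_le h t hh) hh hh'
    (ha x) (ha (Real.exp (t * h) • x)) (ha (Real.exp (t * h) • x)) (hb (Real.exp (t * h) • x))
  have e : h * kM d a b h t x = (Real.exp (2 * (t * h)) * a x - a (Real.exp (t * h) • x)
    - t * h * (2 * a (Real.exp (t * h) • x) - b (Real.exp (t * h) • x))) := by
    rw [kM]; field_simp
  rw [e]; exact this

lemma kN1_bound {K : ℝ} (hh : 0 < h) (ha : ∀ x, |a x| ≤ K) (hb : ∀ x, |b x| ≤ K)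
    (t : ℝ) (x : Ed d) :
    |kN1 d a b h t x| ≤ 6 * K * (Real.exp (2 * (h * |t|)) * (1 + |t|)) :=
  gen2 (one_le_expE h t hh) (Real.exp_pos (2 * (t * h))).le (exp_th_le h t hh)
    (ha _) (ha _) (hb _) (hb _)

lemma kM1_bound {K : ℝ} (hh : 0 < h) (ha : ∀ x, |a x| ≤ K) (hb : ∀ x, |b x| ≤ K)
    (t : ℝ) (x : Ed d) :
    |kM1 d a b h t x| ≤ 6 * K * (Real.exp (2 * (h * |t|)) * (1 + |t|)) :=
  gen2 (one_le_expE h t hh) (Real.exp_pos (2 * (t * h))).le (exp_th_le h t hh)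
    (ha _) (ha _) (hb _) (hb _)

lemma kMd_bound {K : ℝ} (hh : 0 < h) (hh' : h < 1/4) (ha : ∀ x, |a x| ≤ K) (hb : ∀ x, |b x| ≤ K)
    (he : ∀ x, |e x| ≤ K) (t : ℝ) (x : Ed d) :
    |kMd d a b e h t x| ≤ 6 * K * (Real.exp (2 * (h * |t|)) * (1 + |t|)) := by
  have h0 := gen1 (t := t) (one_le_expE h t hh) (Real.exp_pos (2 * (t * h))).le (exp_th_le h t hh) hh hh'
    (ha x) (ha (Real.exp (t * h) • x)) (hb (Real.exp (t * h) • x)) (he (Real.exp (t * h) • x))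
  have h1 := gen1 (t := 0) (one_le_expE h t hh) (Real.exp_pos (2 * (t * h))).le (exp_th_le h t hh) hh hh'
    (ha x) (ha (Real.exp (t * h) • x)) (hb (Real.exp (t * h) • x)) (he (Real.exp (t * h) • x))
  have hK : 0 ≤ K := (abs_nonneg _).trans (ha x)
  have h2 : 3 * K * (Real.exp (2 * (h * |t|)) * (1 + |(0:ℝ)|)) ≤
      3 * K * (Real.exp (2 * (h * |t|)) * (1 + |t|)) := by
    have : 1 + |(0:ℝ)| ≤ 1 + |t| := by simp
    exact mul_le_mul_of_nonneg_left (mul_le_mul_of_nonneg_left this (Real.exp_pos _).le) (by positivity)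
  replace h1 := h1.trans h2
  simp only [kMd]
  rw [abs_le] at *
  constructor <;> linarith

lemma kM1d_bound {K : ℝ} (hh : 0 < h) (hh' : h < 1/4) (ha : ∀ x, |a x| ≤ K) (hb : ∀ x, |b x| ≤ K)
    (he : ∀ x, |e x| ≤ K) (t : ℝ) (x : Ed d) :
    |kM1d d a b e h t x| ≤ 6 * K * (Real.exp (2 * (h * |t|)) * (1 + |t|)) := by
  have hK : 0 ≤ K := (abs_nonneg _).trans (ha x)
  have h0 := gen2 (t := t) (one_le_expE h t hh) (Real.exp_pos (2 * (t * h))).le (exp_th_le h t hh)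
    (ha x) (hb (Real.exp (t * h) • x)) (hb x) (he (Real.exp (t * h) • x))
  have h1 := gen2 (t := t) (one_le_expE h t hh) (Real.exp_pos (2 * (t * h))).le (exp_th_le h t hh)
    (ha x) (K := K) (A' := 0) (B' := 0) (by simpa using hK) (hb x) (by simpa using hK)
  have h2 : kM1d d a b e h t x = h * ((Real.exp (2 * (t * h)) * (2 * a x - b x)
      - (2 * b (Real.exp (t * h) • x) - e (Real.exp (t * h) • x)))
      + (Real.exp (2 * (t * h)) * (2 * a x - b x) - (2 * 0 - 0))) := by
    rw [kM1d]; ring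
  rw [h2, abs_mul, abs_of_pos hh]
  have h3 := (abs_add_le _ _).trans (add_le_add h0 h1)
  have h4 : 0 ≤ K * (Real.exp (2 * (h * |t|)) * (1 + |t|)) := by positivity
  nlinarith [abs_nonneg ((Real.exp (2 * (t * h)) * (2 * a x - b x)
      - (2 * b (Real.exp (t * h) • x) - e (Real.exp (t * h) • x)))
      + (Real.exp (2 * (t * h)) * (2 * a x - b x) - (2 * 0 - 0)))]

lemma kW0_bound {K : ℝ} (hh : 0 < h) (hh' : h < 1/4) (ha : ∀ x, |a x| ≤ K) (hb : ∀ x, |b x| ≤ K)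
    (t : ℝ) (hε : ε * t = |t|) (x : Ed d) :
    |kW0 d a b ε h t x| ≤ 8 * (3 * K / h) * Real.exp (-(1/8 * |t|)) :=
  exp_factor hh hh' t hε (kN_bound hh hh' ha hb t x)

lemma comb12 {ε L1 L2 T X Y : ℝ} (hε : ε = 1 ∨ ε = -1) (hX : |X| ≤ L1 * T) (hY : |Y| ≤ L2 * T) :
    |(1 + ε) * X - Y| ≤ (2 * L1 + L2) * T := by
  have h0 : 0 ≤ L1 * T := (abs_nonneg X).trans hX
  rw [abs_le] at *
  rcases hε with rfl | rfl <;> constructor <;> linarith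

lemma kW1_bound {K : ℝ} (hε1 : ε = 1 ∨ ε = -1)
    (hh : 0 < h) (hh' : h < 1/4) (ha : ∀ x, |a x| ≤ K) (hb : ∀ x, |b x| ≤ K)
    (t : ℝ) (hε : ε * t = |t|) (x : Ed d) :
    |kW1 d a b ε h t x| ≤ 8 * (2 * (3 * K / h) + 6 * K) * Real.exp (-(1/8 * |t|)) :=
  exp_factor hh hh' t hε (comb12 hε1 (kN_bound hh hh' ha hb t x) (kN1_bound hh ha hb t x))

lemma kW2_bound {K : ℝ} (hε1 : ε = 1 ∨ ε = -1)
    (hh : 0 < h) (hh' : h < 1/4) (ha : ∀ x, |a x| ≤ K) (hb : ∀ x, |b x| ≤ K)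
    (t : ℝ) (hε : ε * t = |t|) (x : Ed d) :
    |kW2 d a b ε h t x| ≤ 8 * (2 * (3 * K / h) + 6 * K) * Real.exp (-(1/8 * |t|)) := by
  have := kW1_bound hε1 hh hh' ha hb t hε (Real.exp (t * h) • x)
  rwa [kW2_eq] at this

lemma kW3_bound {K : ℝ} (hε1 : ε = 1 ∨ ε = -1)
    (hh : 0 < h) (hh' : h < 1/4) (ha : ∀ x, |a x| ≤ K) (hb : ∀ x, |b x| ≤ K)
    (he : ∀ x, |e x| ≤ K) (t : ℝ) (hε : ε * t = |t|) (x : Ed d) :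
    |kW3 d a b e ε h t x| ≤ 8 * (42 * K) * Real.exp (-(1/8 * |t|)) := by
  refine exp_factor hh hh' t hε ?_
  have h1 := kM_bound hh hh' ha hb t x
  have h2 := kM1_bound hh ha hb t x
  have h3 := kMd_bound hh hh' ha hb he t x
  have h4 := kM1d_bound hh hh' ha hb he t x
  have hK : 0 ≤ K := (abs_nonneg _).trans (ha x)
  generalize hT : Real.exp (2 * (h * |t|)) * (1 + |t|) = T at *
  have hT0 : 0 ≤ T := by rw [← hT]; positivity
  have hKT : 0 ≤ K * T := by positivity
  generalize kM d a b h t x = m at *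
  generalize kM1 d a b h t x = m1 at *
  have h2' : |(1 - ε - 2 * h) * m1| ≤ 2 * (6 * K * T) := by
    rw [abs_mul]
    refine mul_le_mul ?_ h2 (abs_nonneg _) (by norm_num)
    rw [abs_le]; rcases hε1 with rfl | rfl <;> constructor <;> linarith
  have h1' : |2 * h * (1 + ε) * m| ≤ 4 * (3 * K * T) := by
    have : 2 * h * (1 + ε) * m = (2 * (1 + ε)) * (h * m) := by ring
    rw [this, abs_mul]
    refine mul_le_mul ?_ h1 (abs_nonneg _) (by norm_num)
    rw [abs_le]; rcases hε1 with rfl | rfl <;> constructor <;> norm_num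
  have h34 := comb12 hε1 h3 h4
  rw [abs_le] at *
  constructor <;> linarith

end


lemma integrable_exp_abs : Integrable (fun t : ℝ => Real.exp (-(1/8 * |t|))) := by
  rw [← integrableOn_univ, ← Set.Iic_union_Ioi (a := (0:ℝ))]
  refine IntegrableOn.union ?_ ?_
  · have := integrableOn_exp_mul_Iic (a := 1/8) (by norm_num) 0
    refine this.congr_fun (fun t ht => ?_) measurableSet_Iic
    simp only
    rw [abs_of_nonpos ht]; ring_nf
  · refine (integrableOn_exp_neg (c := 1/8) (by norm_num)).congr_fun (fun t ht => ?_) measurableSet_Ioi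
    simp only
    rw [abs_of_pos ht]

section
variable {d : ℕ} {a b e : Ed d → ℝ} {ε h : ℝ}

lemma kW0_meas (ha : Continuous a) (hb : Continuous b) :
    Measurable (fun z : ℝ × Ed d => ((kW0 d a b ε h z.1 z.2 : ℝ) : ℂ)) := by
  apply Continuous.measurable
  unfold kW0 kN
  fun_prop

lemma kW1_meas (ha : Continuous a) (hb : Continuous b) :
    Measurable (fun z : ℝ × Ed d => ((kW1 d a b ε h z.1 z.2 : ℝ) : ℂ)) := by
  apply Continuous.measurable
  unfold kW1 kN kN1
  fun_prop

lemma kW2_meas (ha : Continuous a) (hb : Continuous b) :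
    Measurable (fun z : ℝ × Ed d => ((kW2 d a b ε h z.1 z.2 : ℝ) : ℂ)) := by
  apply Continuous.measurable
  unfold kW2 kM kM1
  fun_prop

lemma kW3_meas (ha : Continuous a) (hb : Continuous b) (he : Continuous e) :
    Measurable (fun z : ℝ × Ed d => ((kW3 d a b e ε h z.1 z.2 : ℝ) : ℂ)) := by
  apply Continuous.measurable
  unfold kW3 kM kM1 kMd kM1d
  fun_prop

lemma integral_dil_swap (τ : ℝ) (m p q : Ed d → ℂ) :
    ∫ x, m x * (p x * dil d (-τ) q x)
      = ∫ y, m (Real.exp τ • y) * (q y * dil d τ p y) := by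
  have h1 := Measure.integral_comp_smul_of_nonneg (μ := (volume : Measure (Ed d)))
    (fun x => m x * (p x * dil d (-τ) q x)) (Real.exp τ) (hR := (Real.exp_pos τ).le)
  have h2 : ∀ y : Ed d, m (Real.exp τ • y) * (q y * dil d τ p y)
      = (Real.exp (τ * d) : ℂ) * (m (Real.exp τ • y) * (p (Real.exp τ • y) *
        dil d (-τ) q (Real.exp τ • y))) := by
    intro y
    have e1 : Real.exp (-τ) • Real.exp τ • y = y := by
      rw [smul_smul, ← Real.exp_add]; simp
    have e2 : Real.exp (τ * d) * Real.exp (-τ * d / 2) = Real.exp (τ * d / 2) := by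
      rw [← Real.exp_add]; congr 1; ring
    simp only [dil, e1]
    rw [← e2]; push_cast; ring
  simp_rw [h2]
  rw [integral_const_mul, h1, finrank_euclideanSpace_fin, ← Real.exp_nat_mul, ← Real.exp_neg,
    Complex.real_smul, ← mul_assoc, ← Complex.ofReal_mul, ← Real.exp_add]
  have : τ * d + -(d * τ) = 0 := by ring
  rw [this]; simp

theorem core (S : Set ℝ) (hSε : (S = Set.Ioi 0 ∧ ε = 1) ∨ (S = Set.Iic 0 ∧ ε = -1))
    (hh : 0 < h) (hh' : h < 1/4) {K : ℝ}
    (hac : Continuous a) (hbc : Continuous b) (hec : Continuous e)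
    (hab : ∀ x τ, HasDerivAt (fun τ => a (Real.exp τ • x)) (b (Real.exp τ • x)) τ)
    (hbe : ∀ x τ, HasDerivAt (fun τ => b (Real.exp τ • x)) (e (Real.exp τ • x)) τ)
    (ha : ∀ x, |a x| ≤ K) (hb : ∀ x, |b x| ≤ K) (he : ∀ x, |e x| ≤ K)
    {F g : Ed d → ℂ} (hF : Continuous F) (hg : Continuous g) (hF1 : Integrable F)
    (hg1 : Integrable g) (hF2 : eLpNorm F 2 volume ≠ ∞) (hg2 : eLpNorm g 2 volume ≠ ∞) :
    Integrable (fun z : ℝ × Ed d => (kW0 d a b ε h z.1 z.2 : ℂ) * (F z.2 * dil d (z.1 * (-h)) g z.2))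
      ((volume.restrict S).prod volume) ∧
    ‖∫ z : ℝ × Ed d, (kW0 d a b ε h z.1 z.2 : ℂ) * (F z.2 * dil d (z.1 * (-h)) g z.2)
        ∂((volume.restrict S).prod volume)‖
      ≤ 8 * (42 * K) * (∫ t : ℝ, Real.exp (-(1/8 * |t|))) *
        ((eLpNorm (Vd d h (1 - h) F) 2 volume).toReal *
          (eLpNorm (Vd d h (1 - h) g) 2 volume).toReal) := by
  have hS : MeasurableSet S := by
    rcases hSε with ⟨rfl, -⟩ | ⟨rfl, -⟩
    exacts [measurableSet_Ioi, measurableSet_Iic]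
  have hS' : S = Set.Ioi 0 ∨ S = Set.Iic 0 := hSε.imp And.left And.left
  have hε1 : ε = 1 ∨ ε = -1 := hSε.imp And.right And.right
  have hεsq : ε ^ 2 = 1 := by rcases hε1 with rfl | rfl <;> norm_num
  have hεt : ∀ t ∈ S, ε * t = |t| := by
    intro t ht
    rcases hSε with ⟨rfl, rfl⟩ | ⟨rfl, rfl⟩
    · rw [abs_of_pos ht, one_mul]
    · rw [abs_of_nonpos ht, neg_one_mul]
  have hK : 0 ≤ K := (abs_nonneg _).trans (ha 0)
  have hc : 0 < 1 - h := by linarith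
  have hFm := hF.measurable
  have hgm := hg.measurable
  set VF := Vd d h (1 - h) F with hVF
  set Vg := Vd d h (1 - h) g with hVg
  have hVFm : Measurable VF := Vd_measurable d h (1 - h) hFm
  have hVgm : Measurable Vg := Vd_measurable d h (1 - h) hgm
  have hVF2 : eLpNorm VF 2 volume ≠ ∞ := Vd_L2 d hc hFm hF2
  have hVg2 : eLpNorm Vg 2 volume ≠ ∞ := Vd_L2 d hc hgm hg2
  have hμ : ∀ L : ℝ, IntegrableOn (fun t : ℝ => L * Real.exp (-(1/8 * |t|))) S := fun L =>
    (integrable_exp_abs.const_mul L).integrableOn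
  have nrm : ∀ r : ℝ, ‖(r : ℂ)‖ = |r| := fun r => by rw [Complex.norm_real, Real.norm_eq_abs]
  have b0 : ∀ t ∈ S, ∀ x, ‖(kW0 d a b ε h t x : ℂ)‖ ≤ _ := fun t ht x =>
    (nrm _).trans_le (kW0_bound hh hh' ha hb t (hεt t ht) x)
  have b1 : ∀ t ∈ S, ∀ x, ‖(kW1 d a b ε h t x : ℂ)‖ ≤ _ := fun t ht x =>
    (nrm _).trans_le (kW1_bound hε1 hh hh' ha hb t (hεt t ht) x)
  have b2 : ∀ t ∈ S, ∀ x, ‖(kW2 d a b ε h t x : ℂ)‖ ≤ _ := fun t ht x =>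
    (nrm _).trans_le (kW2_bound hε1 hh hh' ha hb t (hεt t ht) x)
  have b3 : ∀ t ∈ S, ∀ x, ‖(kW3 d a b e ε h t x : ℂ)‖ ≤ _ := fun t ht x =>
    (nrm _).trans_le (kW3_bound hε1 hh hh' ha hb he t (hεt t ht) x)
  have i0 := schur_integrable d S hS (fun t x => (kW0 d a b ε h t x : ℂ)) (kW0_meas hac hbc) _ (hμ _) b0 F g
    hFm hgm hF2 hg2 (-h)
  have i0' := schur_integrable d S hS (fun t x => (kW0 d a b ε h t x : ℂ)) (kW0_meas hac hbc) _ (hμ _) b0 F Vg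
    hFm hVgm hF2 hVg2 (-h)
  have i1 := schur_integrable d S hS (fun t x => (kW1 d a b ε h t x : ℂ)) (kW1_meas hac hbc) _ (hμ _) b1 F Vg
    hFm hVgm hF2 hVg2 (-h)
  have i2 := schur_integrable d S hS (fun t x => (kW2 d a b ε h t x : ℂ)) (kW2_meas hac hbc) _ (hμ _) b2 Vg F
    hVgm hFm hVg2 hF2 h
  have i2' := schur_integrable d S hS (fun t x => (kW2 d a b ε h t x : ℂ)) (kW2_meas hac hbc) _ (hμ _) b2 Vg VF
    hVgm hVFm hVg2 hVF2 h
  have i3 := schur_integrable d S hS (fun t x => (kW3 d a b e ε h t x : ℂ)) (kW3_meas hac hbc hec) _ (hμ _) b3 Vg VF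
    hVgm hVFm hVg2 hVF2 h
  refine ⟨i0, ?_⟩
  have step1 : ∫ z : ℝ × Ed d, (kW0 d a b ε h z.1 z.2 : ℂ) * (F z.2 * dil d (z.1 * (-h)) g z.2)
        ∂((volume.restrict S).prod volume) =
      ∫ z : ℝ × Ed d, (kW1 d a b ε h z.1 z.2 : ℂ) * (F z.2 * dil d (z.1 * (-h)) Vg z.2)
        ∂((volume.restrict S).prod volume) := by
    rw [integral_prod_symm _ i0, integral_prod_symm _ i1]
    refine integral_congr_ae ?_
    filter_upwards [i0.prod_left_ae, i0'.prod_left_ae, i1.prod_left_ae,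
      Vd_ae d hh.le hc hgm hg1] with x j0 j0' j1 jV
    have hd : ∀ t, HasDerivAt (fun t => (kW0 d a b ε h t x : ℂ) * (F x * dil d (t * (-h)) Vg x))
        ((kW0 d a b ε h t x : ℂ) * (F x * dil d (t * (-h)) g x)
          - (kW1 d a b ε h t x : ℂ) * (F x * dil d (t * (-h)) Vg x)) t := by
      intro t
      have e1 := (kW0_deriv (ε := ε) hh.ne' hab t x).ofReal_comp
      have e2 := (Vd_hasDerivAt d h (1 - h) hg x jV (-t)).scomp t (hasDerivAt_neg t)
      have e3 : HasDerivAt (fun t => dil d (t * (-h)) Vg x)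
          (-((1 - h : ℝ) * dil d (t * (-h)) Vg x - dil d (t * (-h)) g x)) t := by
        have q : ∀ t : ℝ, -t * h = t * (-h) := fun t => by ring
        simp only [Function.comp_def, q] at e2
        simpa using e2
      refine (e1.mul (e3.const_mul (F x))).congr_deriv ?_
      push_cast
      ring
    have hz := halfline_zero S hS' _ _ (by simp [kW0_zero]) hd j0' (j0.sub j1)
    rw [integral_sub j0 j1] at hz
    exact sub_eq_zero.1 hz
  have step2 : ∫ z : ℝ × Ed d, (kW1 d a b ε h z.1 z.2 : ℂ) * (F z.2 * dil d (z.1 * (-h)) Vg z.2)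
        ∂((volume.restrict S).prod volume) =
      ∫ z : ℝ × Ed d, (kW2 d a b ε h z.1 z.2 : ℂ) * (Vg z.2 * dil d (z.1 * h) F z.2)
        ∂((volume.restrict S).prod volume) := by
    rw [integral_prod _ i1, integral_prod _ i2]
    refine integral_congr_ae (ae_of_all _ fun t => ?_)
    have := integral_dil_swap (t * h) (fun x => (kW1 d a b ε h t x : ℂ)) F Vg
    simp only [kW2_eq] at this
    simp only [mul_neg]
    exact this
  have step3 : ∫ z : ℝ × Ed d, (kW2 d a b ε h z.1 z.2 : ℂ) * (Vg z.2 * dil d (z.1 * h) F z.2)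
        ∂((volume.restrict S).prod volume) =
      ∫ z : ℝ × Ed d, (kW3 d a b e ε h z.1 z.2 : ℂ) * (Vg z.2 * dil d (z.1 * h) VF z.2)
        ∂((volume.restrict S).prod volume) := by
    rw [integral_prod_symm _ i2, integral_prod_symm _ i3]
    refine integral_congr_ae ?_
    filter_upwards [i2.prod_left_ae, i2'.prod_left_ae, i3.prod_left_ae,
      Vd_ae d hh.le hc hFm hF1] with x j0 j0' j1 jV
    have hd : ∀ t, HasDerivAt (fun t => (kW2 d a b ε h t x : ℂ) * (Vg x * dil d (t * h) VF x))
        ((kW3 d a b e ε h t x : ℂ) * (Vg x * dil d (t * h) VF x)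
          - (kW2 d a b ε h t x : ℂ) * (Vg x * dil d (t * h) F x)) t := by
      intro t
      have e1 := (kW2_deriv (ε := ε) hh.ne' hεsq hab hbe t x).ofReal_comp
      have e2 := Vd_hasDerivAt d h (1 - h) hF x jV t
      refine (e1.mul (e2.const_mul (Vg x))).congr_deriv ?_
      push_cast
      ring
    have hz := halfline_zero S hS' _ _ (by simp [kW2_zero]) hd j0' (j1.sub j0)
    rw [integral_sub j1 j0] at hz
    exact (sub_eq_zero.1 hz).symm
  rw [step1, step2, step3]
  refine (schur_norm d S hS (fun t x => (kW3 d a b e ε h t x : ℂ)) (kW3_meas hac hbc hec) _ (hμ _)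
    (fun t => by positivity) b3 Vg VF hVgm hVFm hVg2 hVF2 h).trans ?_
  rw [mul_comm (eLpNorm Vg 2 volume).toReal]
  refine mul_le_mul_of_nonneg_right ?_ (by positivity)
  rw [integral_const_mul]
  refine mul_le_mul_of_nonneg_left ?_ (by positivity)
  exact setIntegral_le_integral integrable_exp_abs (ae_of_all _ fun t => (Real.exp_pos _).le)

end


lemma taylor_scalar {φ p q : ℝ → ℝ} (h1 : ∀ τ, HasDerivAt φ (p τ) τ) (h2 : ∀ τ, HasDerivAt p (q τ) τ)
    (hq : Continuous q) (τ : ℝ) :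
    τ * (τ * ∫ s in (0:ℝ)..1, s * ∫ σ in (0:ℝ)..1, deriv p (σ * (s * τ))) = φ τ - φ 0 - τ * p 0 := by
  have hp : Continuous p := continuous_iff_continuousAt.2 fun t => (h2 t).continuousAt
  have dp : deriv p = q := funext fun t => (h2 t).deriv
  have key : ∀ r : ℝ, r * ∫ σ in (0:ℝ)..1, q (σ * r) = p r - p 0 := by
    intro r
    have := intervalIntegral.mul_integral_comp_mul_right (f := q) (a := 0) (b := 1) r
    rw [this, zero_mul, one_mul]
    exact intervalIntegral.integral_eq_sub_of_hasDerivAt (fun t _ => h2 t)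
      (hq.intervalIntegrable _ _)
  rw [dp, ← intervalIntegral.integral_const_mul]
  have : ∀ s : ℝ, τ * (s * ∫ σ in (0:ℝ)..1, q (σ * (s * τ))) = p (s * τ) - p 0 := by
    intro s
    rw [← key]; ring
  simp_rw [this]
  rw [intervalIntegral.integral_sub, mul_sub, intervalIntegral.mul_integral_comp_mul_right (f := p),
    zero_mul, one_mul, intervalIntegral.integral_eq_sub_of_hasDerivAt (fun t _ => h1 t)
      (hp.intervalIntegrable _ _)]
  · simp
  · exact (hp.comp (continuous_mul_const τ)).intervalIntegrable _ _
  · exact continuous_const.intervalIntegrable _ _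

lemma orbit_deriv {d : ℕ} {a : Ed d → ℝ} (ha : Differentiable ℝ a) (x : Ed d) (τ : ℝ) :
    HasDerivAt (fun τ => a (Real.exp τ • x)) (xdotOp d a (Real.exp τ • x)) τ := by
  have h1 : HasDerivAt (fun τ : ℝ => Real.exp τ • x) (Real.exp τ • x) τ :=
    (Real.hasDerivAt_exp τ).smul_const x
  exact (ha _).hasFDerivAt.comp_hasDerivAt τ h1

lemma xdot_contDiff {d : ℕ} {a : Ed d → ℝ} (ha : ContDiff ℝ (⊤ : ℕ∞) a) :
    ContDiff ℝ (⊤ : ℕ∞) (xdotOp d a) := by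
  unfold xdotOp
  exact (ha.fderiv_right (m := (⊤ : ℕ∞)) (by simp)).clm_apply contDiff_id

lemma diff_of_smooth {d : ℕ} {a : Ed d → ℝ} (ha : ContDiff ℝ (⊤ : ℕ∞) a) : Differentiable ℝ a :=
  ha.differentiable (by simp)

lemma bCoef_closed {d : ℕ} {H : Ed d → Fin d → Fin d → ℝ} (j k : Fin d)
    (ha : ContDiff ℝ (⊤ : ℕ∞) (fun x => Gmat d H x j k)) (τ : ℝ) (x : Ed d) :
    τ * bCoef d H τ x j k = Real.exp (2 * τ) * Gmat d H (Real.exp (-τ) • x) j k - Gmat d H x j k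
      - τ * (2 * Gmat d H x j k - xdotOp d (fun x => Gmat d H x j k) x) := by
  set a : Ed d → ℝ := fun x => Gmat d H x j k with hadef
  set b := xdotOp d a with hb
  have hbs : ContDiff ℝ (⊤ : ℕ∞) b := xdot_contDiff ha
  have hes : ContDiff ℝ (⊤ : ℕ∞) (xdotOp d b) := xdot_contDiff hbs
  have orb : ∀ f : Ed d → ℝ, ContDiff ℝ (⊤ : ℕ∞) f → ∀ τ : ℝ,
      HasDerivAt (fun τ => f (Real.exp (-τ) • x)) (-(xdotOp d f (Real.exp (-τ) • x))) τ := by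
    intro f hf τ
    have := (orbit_deriv (diff_of_smooth hf) x (-τ)).comp τ (hasDerivAt_neg τ)
    simpa [Function.comp_def] using this
  have hE : ∀ τ : ℝ, HasDerivAt (fun τ : ℝ => Real.exp (2 * τ)) (2 * Real.exp (2 * τ)) τ := by
    intro τ
    have := ((hasDerivAt_id τ).const_mul (2:ℝ)).exp
    simpa [mul_comm] using this
  have := taylor_scalar (φ := fun τ => Real.exp (2 * τ) * a (Real.exp (-τ) • x))
    (p := fun τ => ptauCoef d H τ x j k)
    (q := fun τ => Real.exp (2 * τ) * (4 * a (Real.exp (-τ) • x) - 4 * b (Real.exp (-τ) • x)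
      + xdotOp d b (Real.exp (-τ) • x))) ?_ ?_ ?_ τ
  · simp only [bCoef, qCoef]
    rw [this]
    simp [ptauCoef, commCoef, a, b]
  · intro τ
    refine ((hE τ).mul (orb a ha τ)).congr_deriv ?_
    simp only [ptauCoef, commCoef, a]; ring
  · intro τ
    have h3 := (hE τ).mul (((orb a ha τ).const_mul 2).sub (orb b hbs τ))
    refine h3.congr_deriv ?_
    simp only [Pi.sub_apply, ← hb]; ring
  · have := ha.continuous
    have := hbs.continuous
    have := hes.continuous
    fun_prop

lemma kN_eq {d : ℕ} {H : Ed d → Fin d → Fin d → ℝ} (j k : Fin d)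
    (ha : ContDiff ℝ (⊤ : ℕ∞) (fun x => Gmat d H x j k)) {h : ℝ} (hh : h ≠ 0) (t : ℝ) (x : Ed d) :
    t * bCoef d H (t * h) x j k
      = kN d (fun x => Gmat d H x j k) (xdotOp d (fun x => Gmat d H x j k)) h t x := by
  have := bCoef_closed j k ha (t * h) x
  rw [kN, mul_neg]
  field_simp
  rw [this, mul_comm (t * h) 2]

lemma xdot_Gmat {d : ℕ} (H : Ed d → Fin d → Fin d → ℝ) (j k : Fin d) :
    xdotOp d (fun x => Gmat d H x j k) = xdotOp d (fun x => H x j k) := by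
  funext x
  simp only [xdotOp, Gmat]
  rw [fderiv_const_add]

lemma Gmat_smooth {d : ℕ} {H : Ed d → Fin d → Fin d → ℝ} {j k : Fin d}
    (h : CbSmooth d (fun x => H x j k)) : CbSmooth d (fun x => Gmat d H x j k) := by
  refine ⟨contDiff_const.add h.1, fun n => ?_⟩
  obtain ⟨C, hC⟩ := h.2 n
  rcases Nat.eq_zero_or_pos n with rfl | hn
  · refine ⟨1 + C, fun x => ?_⟩
    have := hC x
    rw [norm_iteratedFDeriv_zero] at this ⊢
    refine (norm_add_le _ _).trans (add_le_add ?_ this)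
    split_ifs <;> simp
  · refine ⟨C, fun x => ?_⟩
    have : (fun x => Gmat d H x j k) = (fun _ => (if j = k then (1:ℝ) else 0)) + fun x => H x j k := rfl
    rw [this, iteratedFDeriv_add_apply, iteratedFDeriv_const_of_ne hn.ne']
    · simpa using hC x
    · exact contDiff_const.contDiffAt
    · exact (h.1.of_le (by exact_mod_cast le_top)).contDiffAt

lemma CbSmooth_temperate {d : ℕ} {a : Ed d → ℝ} (h : CbSmooth d a) :
    Function.HasTemperateGrowth a := by
  refine ⟨h.1, fun n => ?_⟩
  obtain ⟨C, hC⟩ := h.2 n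
  exact ⟨0, C, fun x => by simpa using hC x⟩

lemma fderiv_temperate {E F : Type*} [NormedAddCommGroup E] [NormedSpace ℝ E] [NormedAddCommGroup F]
    [NormedSpace ℝ F] {a : E → F} (h : Function.HasTemperateGrowth a) :
    Function.HasTemperateGrowth (fderiv ℝ a) := by
  refine ⟨h.1.fderiv_right (by simp), fun n => ?_⟩
  obtain ⟨k, C, hC⟩ := h.2 (n+1)
  exact ⟨k, C, fun x => by rw [norm_iteratedFDeriv_fderiv]; exact hC x⟩


section parts
open scoped LineDeriv SchwartzMap

/-- Basis vector. -/
abbrev bv (d : ℕ) (j : Fin d) : Ed d := EuclideanSpace.single j (1:ℝ)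

lemma pd_eq {d : ℕ} (j : Fin d) (u : SchwartzMap (Ed d) ℂ) : pd d j ⇑u = ⇑(∂_{bv d j} u : SchwartzMap (Ed d) ℂ) := by
  funext x
  rw [SchwartzMap.lineDerivOp_apply_eq_fderiv]; rfl

/-- Dilation of a Schwartz function. -/
def dilS (d : ℕ) (τ : ℝ) (u : SchwartzMap (Ed d) ℂ) : SchwartzMap (Ed d) ℂ :=
  (Real.exp (τ * d / 2) : ℂ) • SchwartzMap.compCLMOfContinuousLinearEquiv ℂ
    (ContinuousLinearEquiv.smulLeft (R₁ := ℝ) (M₁ := Ed d)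
      (Units.mk0 (Real.exp τ) (Real.exp_pos τ).ne')) u

lemma dilS_coe (d : ℕ) (τ : ℝ) (u : SchwartzMap (Ed d) ℂ) : ⇑(dilS d τ u) = dil d τ ⇑u := by
  funext x
  simp [dilS, dil, Units.smul_def]

lemma dilS_deriv (d : ℕ) (τ : ℝ) (u : SchwartzMap (Ed d) ℂ) (v x : Ed d) :
    (∂_{v} (dilS d τ u)) x = (Real.exp τ : ℂ) * dil d τ ⇑(∂_{v} u : SchwartzMap (Ed d) ℂ) x := by
  rw [dilS, LineDeriv.lineDerivOp_smul, SchwartzMap.lineDerivOp_compCLMOfContinuousLinearEquiv]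
  simp [dil, Units.smul_def, SchwartzMap.lineDerivOp_apply_eq_fderiv]
  ring

lemma parts_basic {d : ℕ} {b : Ed d → ℝ} (hb : Function.HasTemperateGrowth b) (j k : Fin d)
    (u v : SchwartzMap (Ed d) ℂ) :
    Integrable (fun x => conj (fderiv ℝ (fun y => (b y : ℂ) * fderiv ℝ u y (bv d k)) x (bv d j)) * v x) ∧
    ∫ x, conj (fderiv ℝ (fun y => (b y : ℂ) * fderiv ℝ u y (bv d k)) x (bv d j)) * v x
      = -∫ x, (b x : ℂ) * (conj (pd d k u x) * (∂_{bv d j} v) x) := by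
  have hbC : Function.HasTemperateGrowth (fun y => (b y : ℂ)) :=
    Function.Complex.hasTemperateGrowth_ofReal.comp hb
  set w : SchwartzMap (Ed d) ℂ := SchwartzMap.smulLeftCLM ℂ (fun y => (b y : ℂ)) (∂_{bv d k} u) with hw
  have hwe : (fun y => (b y : ℂ) * fderiv ℝ u y (bv d k)) = ⇑w := by
    funext y
    rw [hw, SchwartzMap.smulLeftCLM_apply_apply hbC, SchwartzMap.lineDerivOp_apply_eq_fderiv, smul_eq_mul]
  let L : ℂ →L[ℝ] ℂ →L[ℝ] ℂ := (ContinuousLinearMap.mul ℝ ℂ).comp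
    (Complex.conjCLE : ℂ →L[ℝ] ℂ)
  have hL : ∀ p q, L p q = conj p * q := fun p q => by simp [L]
  have key := SchwartzMap.integral_bilinear_lineDerivOp_right_eq_neg_left (μ := (volume : Measure (Ed d)))
    w v L (bv d j)
  have hd : ∀ x, fderiv ℝ (fun y => (b y : ℂ) * fderiv ℝ u y (bv d k)) x (bv d j) = (∂_{bv d j} w) x := by
    intro x; rw [hwe, SchwartzMap.lineDerivOp_apply_eq_fderiv]
  simp_rw [hd]
  simp only [hL] at key
  constructor
  · have := (SchwartzMap.bilinLeftCLM L v.hasTemperateGrowth (∂_{bv d j} w)).integrable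
      (μ := (volume : Measure (Ed d)))
    refine this.congr (ae_of_all _ fun x => ?_)
    simp [hL]
  · rw [← neg_eq_iff_eq_neg, ← key]
    refine integral_congr_ae (ae_of_all _ fun x => ?_)
    simp only [hw]
    rw [SchwartzMap.smulLeftCLM_apply_apply hbC, pd_eq]
    simp [mul_assoc]

lemma pair_eq {d : ℕ} (τ : ℝ) {B : Ed d → Fin d → Fin d → ℝ}
    (hB : ∀ j k, Function.HasTemperateGrowth (fun x => B x j k)) (u₁ u₂ : SchwartzMap (Ed d) ℂ) :
    pairL2 d (dil d τ (divGrad d B ⇑u₁)) ⇑u₂ = ∑ j, ∑ k, (Real.exp (-τ) : ℂ) *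
      ∫ x, (B x j k : ℂ) * (conj (pd d k u₁ x) * dil d (-τ) (pd d j u₂) x) := by
  have h0 : pairL2 d (dil d τ (divGrad d B ⇑u₁)) ⇑u₂
      = ∫ x, conj (divGrad d B u₁ x) * dil d (-τ) u₂ x := by
    have := integral_dil_swap (d := d) τ (fun _ => 1) (fun x => conj (divGrad d B u₁ x)) u₂
    simp only [one_mul] at this
    rw [this, pairL2]
    refine integral_congr_ae (ae_of_all _ fun x => ?_)
    simp only [dil, map_mul, Complex.conj_ofReal]
    ring
  rw [h0, ← dilS_coe]
  have h1 : ∀ x, conj (divGrad d B u₁ x) * dilS d (-τ) u₂ x = -∑ j, ∑ k,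
      conj (fderiv ℝ (fun y => (B y j k : ℂ) * fderiv ℝ u₁ y (bv d k)) x (bv d j)) * dilS d (-τ) u₂ x := by
    intro x
    simp only [divGrad, divGradC, map_neg, map_sum, neg_mul, Finset.sum_mul]
  simp_rw [h1]
  rw [integral_neg, integral_finsetSum, ← Finset.sum_neg_distrib]
  · refine Finset.sum_congr rfl fun j _ => ?_
    rw [integral_finsetSum, ← Finset.sum_neg_distrib]
    · refine Finset.sum_congr rfl fun k _ => ?_
      rw [(parts_basic (hB j k) j k u₁ _).2, neg_neg, ← integral_const_mul]
      refine integral_congr_ae (ae_of_all _ fun x => ?_)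
      simp only [dilS_deriv, pd_eq]
      ring
    · intro k _
      exact (parts_basic (hB j k) j k u₁ _).1
  · intro j _
    exact integrable_finsetSum _ fun k _ => (parts_basic (hB j k) j k u₁ _).1

lemma bCoef_temperate {d : ℕ} {H : Ed d → Fin d → Fin d → ℝ} {j k : Fin d}
    (ha : CbSmooth d (fun x => H x j k)) {τ : ℝ} (hτ : τ ≠ 0) :
    Function.HasTemperateGrowth (fun x => bCoef d H τ x j k) := by
  have hG := Gmat_smooth ha
  have ht := CbSmooth_temperate hG
  have hx : Function.HasTemperateGrowth (xdotOp d (fun x => Gmat d H x j k)) :=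
    ContinuousLinearMap.bilinear_hasTemperateGrowth (𝕜 := ℝ)
      (ContinuousLinearMap.id ℝ (Ed d →L[ℝ] ℝ)) (fderiv_temperate ht) Function.HasTemperateGrowth.id
  have hs : Function.HasTemperateGrowth (fun x : Ed d => Gmat d H (Real.exp (-τ) • x) j k) :=
    ht.comp ((Real.exp (-τ)) • ContinuousLinearMap.id ℝ (Ed d)).hasTemperateGrowth
  have e : (fun x => bCoef d H τ x j k) = fun x => τ⁻¹ * (Real.exp (2 * τ) * Gmat d H (Real.exp (-τ) • x) j k - Gmat d H x j k
      - τ * (2 * Gmat d H x j k - xdotOp d (fun x => Gmat d H x j k) x)) := by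
    funext x
    rw [← bCoef_closed j k hG.1]; field_simp
  rw [e]
  have c : ∀ r : ℝ, Function.HasTemperateGrowth (fun _ : Ed d => r) := fun r => .const r
  exact (c _).mul ((((c _).mul hs).sub ht).sub ((c _).mul (((c _).mul ht).sub hx)))

end parts


section plancherel
open scoped SchwartzMap

lemma fourier_flip {d : ℕ} {f g : Ed d → ℂ} (hf : Integrable f) (hg : Integrable g) :
    ∫ ξ, 𝓕 f ξ * g ξ = ∫ x, f x * 𝓕 g x := by
  simpa using! (VectorFourier.integral_fourierIntegral_smul_eq_flip (L := innerₗ (Ed d))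
      (μ := (volume : Measure (Ed d))) (ν := (volume : Measure (Ed d)))
      Real.continuous_fourierChar continuous_inner hf hg)

lemma fourier_cont {d : ℕ} {f : Ed d → ℂ} (hf : Integrable f) : Continuous (𝓕 f) :=
  VectorFourier.fourierIntegral_continuous (L := innerₗ (Ed d)) Real.continuous_fourierChar
    continuous_inner hf

lemma plancherel_L1L2 {d : ℕ} {v : Ed d → ℂ} (h1 : Integrable v) (h2 : MemLp v 2 volume) :
    eLpNorm (𝓕 v) 2 volume = eLpNorm v 2 volume := by
  set V : Lp ℂ 2 (volume : Measure (Ed d)) := h2.toLp v with hV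
  have hVv : V =ᵐ[volume] v := h2.coeFn_toLp
  have key : ∀ᵐ x, (𝓕 V : Lp ℂ 2 (volume : Measure (Ed d))) x = 𝓕 v x := by
    refine ae_eq_of_integral_contDiff_smul_eq ?_ (fourier_cont h1).locallyIntegrable ?_
    · exact (Lp.memLp _).locallyIntegrable (by norm_num)
    · intro g hg hgc
      have hgC : ContDiff ℝ (⊤ : ℕ∞) (fun x => (g x : ℂ)) := Complex.ofRealCLM.contDiff.comp hg
      have hgcC : HasCompactSupport (fun x => (g x : ℂ)) := hgc.comp_left (g := fun r : ℝ => (r : ℂ)) (by simp)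
      let ψ : SchwartzMap (Ed d) ℂ := hgcC.toSchwartzMap hgC
      have hψ : ∀ x, ψ x = (g x : ℂ) := fun x => rfl
      have e := congrArg (fun T => T ψ) (Lp.fourier_toTemperedDistribution_eq V)
      simp only [TemperedDistribution.fourier_apply, Lp.toTemperedDistribution_apply] at e
      have e1 : ∀ f : Ed d → ℂ, ∫ x, g x • f x = ∫ x, ψ x • f x := by
        intro f; refine integral_congr_ae (ae_of_all _ fun x => ?_)
        simp [hψ]
      rw [e1, e1, ← e]
      have e2 : ∫ x, (𝓕 ψ) x • V x = ∫ x, v x * 𝓕 (ψ : Ed d → ℂ) x := by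
        refine integral_congr_ae ?_
        filter_upwards [hVv] with x hx
        rw [hx, SchwartzMap.fourier_coe, smul_eq_mul, mul_comm]
      rw [e2, ← fourier_flip h1 ψ.integrable]
      refine integral_congr_ae (ae_of_all _ fun x => ?_)
      simp [mul_comm]
  rw [← eLpNorm_congr_ae key, ← eLpNorm_congr_ae hVv]
  have := Lp.norm_fourier_eq V
  rw [Lp.norm_def, Lp.norm_def] at this
  exact (ENNReal.toReal_eq_toReal_iff' (Lp.eLpNorm_ne_top _) (Lp.eLpNorm_ne_top _)).1 this
end plancherel


lemma fourier_dil (d : ℕ) (τ : ℝ) (F : Ed d → ℂ) (ξ : Ed d) :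
    𝓕 (dil d τ F) ξ = (Real.exp (-(τ * d / 2)) : ℂ) * 𝓕 F (Real.exp (-τ) • ξ) := by
  rw [Real.fourier_eq, Real.fourier_eq]
  have h1 := Measure.integral_comp_smul_of_nonneg (μ := (volume : Measure (Ed d)))
    (fun x => Real.fourierChar (-inner ℝ x (Real.exp (-τ) • ξ)) • F x) (Real.exp τ)
    (hR := (Real.exp_pos τ).le)
  have e : ∀ v : Ed d, Real.fourierChar (-inner ℝ v ξ) • dil d τ F v
      = (Real.exp (τ * d / 2) : ℂ) * (Real.fourierChar (-inner ℝ (Real.exp τ • v) (Real.exp (-τ) • ξ))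
        • F (Real.exp τ • v)) := by
    intro v
    have : inner ℝ (Real.exp τ • v) (Real.exp (-τ) • ξ) = inner ℝ v ξ := by
      rw [real_inner_smul_left, real_inner_smul_right, ← mul_assoc, ← Real.exp_add]; simp
    rw [this, dil]
    simp only [Circle.smul_def, smul_eq_mul]; ring
  simp_rw [e]
  rw [integral_const_mul, h1, Complex.real_smul, ← mul_assoc]
  congr 1
  rw [← Complex.ofReal_mul]
  congr 1
  rw [finrank_euclideanSpace, Fintype.card_fin, ← Real.exp_nat_mul, ← Real.exp_neg, ← Real.exp_add]
  congr 1; ring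

lemma fourier_Vd (d : ℕ) {h c : ℝ} (hh : 0 ≤ h) (hc : 0 < c) {F : Ed d → ℂ} (hF : Measurable F)
    (hF1 : Integrable F) (ξ : Ed d) :
    𝓕 (Vd d h c F) ξ = ∫ s in Set.Ioi (0:ℝ), (Real.exp (-(c * s)) : ℂ) *
      ((Real.exp (-(s * h * d / 2)) : ℂ) * 𝓕 F (Real.exp (-(s * h)) • ξ)) := by
  have hk := Vd_kernel_integrable d hh hc hF hF1
  have hk' : Integrable (fun z : Ed d × ℝ => Real.fourierChar (-inner ℝ z.1 ξ) •
      ((Real.exp (-(c*z.2)):ℂ) * dil d (z.2*h) F z.1))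
      ((volume : Measure (Ed d)).prod (volume.restrict (Set.Ioi 0))) := by
    refine hk.swap.mono ?_ (ae_of_all _ fun z => ?_)
    · have hm : Continuous (fun z : Ed d × ℝ => Real.fourierChar (-inner ℝ z.1 ξ)) :=
        Real.continuous_fourierChar.comp (by fun_prop)
      have := (continuous_subtype_val.comp hm).aestronglyMeasurable
        (μ := (volume : Measure (Ed d)).prod (volume.restrict (Set.Ioi (0:ℝ))))
      exact this.mul hk.swap.aestronglyMeasurable
    · simp
  rw [Real.fourier_eq]
  simp only [Vd, Circle.smul_def, smul_eq_mul, ← integral_const_mul]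
  simp only [Circle.smul_def, smul_eq_mul] at hk'
  rw [integral_integral_swap (f := fun v s => (Real.fourierChar (-inner ℝ v ξ) : ℂ) *
      ((Real.exp (-(c*s)):ℂ) * dil d (s*h) F v)) hk']
  refine integral_congr_ae (ae_of_all _ fun s => ?_)
  simp only
  rw [← fourier_dil, Real.fourier_eq, ← integral_const_mul]
  refine integral_congr_ae (ae_of_all _ fun v => ?_)
  simp only [Circle.smul_def, smul_eq_mul]; ring

section
open scoped LineDeriv SchwartzMap

lemma fourier_pd {d : ℕ} (k : Fin d) (u : SchwartzMap (Ed d) ℂ) (η : Ed d) :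
    𝓕 (pd d k ⇑u) η = 2 * π * I * (η k : ℂ) * 𝓕 (⇑u) η := by
  rw [pd_eq, ← SchwartzMap.fourier_coe, SchwartzMap.fourier_lineDerivOp_eq]
  have : (fun x : Ed d => inner ℝ x (bv d k)).HasTemperateGrowth := by fun_prop
  rw [SchwartzMap.smul_apply, SchwartzMap.smulLeftCLM_apply_apply this, SchwartzMap.fourier_coe]
  simp only [bv, EuclideanSpace.inner_single_right, smul_eq_mul, Complex.real_smul]
  simp
  ring

lemma pd_cont {d : ℕ} (k : Fin d) (u : SchwartzMap (Ed d) ℂ) : Continuous (pd d k ⇑u) := by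
  rw [pd_eq]; exact SchwartzMap.continuous _

lemma pd_int {d : ℕ} (k : Fin d) (u : SchwartzMap (Ed d) ℂ) : Integrable (pd d k ⇑u) := by
  rw [pd_eq]; exact SchwartzMap.integrable _

lemma pd_L2 {d : ℕ} (k : Fin d) (u : SchwartzMap (Ed d) ℂ) : eLpNorm (pd d k ⇑u) 2 volume ≠ ∞ := by
  rw [pd_eq]; exact (SchwartzMap.memLp _ 2 volume).2.ne
end

lemma fourier_Vd_pd {d : ℕ} (k : Fin d) (u : SchwartzMap (Ed d) ℂ) {h : ℝ} (hh : 0 ≤ h) (hh' : h < 1)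
    (ξ : Ed d) : 𝓕 (Vd d h (1 - h) (pd d k ⇑u)) ξ = 2 * π * I * (ξ k : ℂ) * 𝓕 (Vd d h 1 ⇑u) ξ := by
  rw [fourier_Vd d hh (by linarith) (pd_cont k u).measurable (pd_int k u),
    fourier_Vd d hh one_pos u.continuous.measurable u.integrable, ← integral_const_mul]
  refine integral_congr_ae (ae_of_all _ fun s => ?_)
  simp only [fourier_pd]
  have : (Real.exp (-((1 - h) * s)) : ℂ) * (Real.exp (-(s * h)) : ℂ) = (Real.exp (-(1 * s)) : ℂ) := by
    rw [← Complex.ofReal_mul, ← Real.exp_add]; congr 2; ring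
  rw [← this]
  simp only [PiLp.smul_apply, smul_eq_mul, Complex.ofReal_mul]
  ring

lemma resDil_eq {d : ℕ} (h : ℝ) (u : Ed d → ℂ) :
    resDil d h (-I) u = fun x => I⁻¹ * Vd d h 1 u x := by
  funext x
  simp only [resDil, Vd]
  rw [if_pos (by simp), integral_Ici_eq_integral_Ioi]
  congr 1
  refine integral_congr_ae (ae_of_all _ fun s => ?_)
  simp only
  congr 1
  rw [Complex.ofReal_exp]
  congr 1
  push_cast
  linear_combination (s:ℂ) * Complex.I_mul_I

lemma fourier_const {d : ℕ} (c : ℂ) (f : Ed d → ℂ) (ξ : Ed d) :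
    𝓕 (fun x => c * f x) ξ = c * 𝓕 f ξ := by
  rw [Real.fourier_eq, Real.fourier_eq, ← integral_const_mul]
  refine integral_congr_ae (ae_of_all _ fun v => ?_)
  simp only [Circle.smul_def, smul_eq_mul]; ring

lemma Vd_pd_le {d : ℕ} (k : Fin d) (u : SchwartzMap (Ed d) ℂ) {h : ℝ} (hh : 0 ≤ h) (hh' : h < 1) :
    (eLpNorm (Vd d h (1 - h) (pd d k ⇑u)) 2 volume).toReal ≤ 2 * π * Dnorm d (resDil d h (-I) ⇑u) := by
  have hc : 0 < 1 - h := by linarith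
  set W := 𝓕 (Vd d h 1 ⇑u) with hW
  have hL1 : ∀ l, Integrable (Vd d h (1 - h) (pd d l ⇑u)) := fun l =>
    Vd_integrable d hh hc (pd_cont l u).measurable (pd_int l u)
  have hL2 : ∀ l, eLpNorm (Vd d h (1 - h) (pd d l ⇑u)) 2 volume ≠ ∞ := fun l =>
    Vd_L2 d hc (pd_cont l u).measurable (pd_L2 l u)
  have hP : ∀ l, eLpNorm (fun ξ : Ed d => 2 * π * I * (ξ l : ℂ) * W ξ) 2 volume
      = eLpNorm (Vd d h (1 - h) (pd d l ⇑u)) 2 volume := by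
    intro l
    rw [← plancherel_L1L2 (hL1 l) ⟨(hL1 l).aestronglyMeasurable, (hL2 l).lt_top⟩]
    congr 1
    funext ξ
    rw [fourier_Vd_pd l u hh hh']
  have hWc : Continuous W := fourier_cont (Vd_integrable d hh one_pos u.continuous.measurable u.integrable)
  have hD : ∀ ξ : Ed d, ‖(‖ξ‖ : ℂ) * 𝓕 (resDil d h (-I) ⇑u) ξ‖ = ‖ξ‖ * ‖W ξ‖ := by
    intro ξ
    rw [resDil_eq, fourier_const]
    simp [hW]
  have hco : ∀ (ξ : Ed d) (l : Fin d), ‖2 * π * I * (ξ l : ℂ) * W ξ‖ = 2 * π * (|ξ l| * ‖W ξ‖) := by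
    intro ξ l
    simp [abs_of_pos Real.pi_pos]; ring
  have hfin : eLpNorm (fun ξ : Ed d => (‖ξ‖ : ℂ) * 𝓕 (resDil d h (-I) ⇑u) ξ) 2 volume ≠ ∞ := by
    have hS : MemLp (fun ξ : Ed d => ∑ l, ‖2 * π * I * (ξ l : ℂ) * W ξ‖) 2 volume := by
      refine memLp_finsetSum _ fun l _ => ?_
      have : MemLp (fun ξ : Ed d => 2 * π * I * (ξ l : ℂ) * W ξ) 2 volume := by
        refine ⟨(by fun_prop : Continuous _).aestronglyMeasurable, ?_⟩
        rw [hP]; exact (hL2 l).lt_top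
      exact this.norm
    refine ((eLpNorm_mono_ae (ae_of_all _ fun ξ => ?_)).trans_lt hS.2).ne
    rw [hD, Real.norm_of_nonneg (Finset.sum_nonneg fun _ _ => norm_nonneg _)]
    have h1 : ‖ξ‖ ≤ ∑ l, |ξ l| := by
      rw [EuclideanSpace.norm_eq]
      refine Real.sqrt_le_iff.2 ⟨Finset.sum_nonneg fun _ _ => abs_nonneg _, ?_⟩
      simpa using Finset.sum_sq_le_sq_sum_of_nonneg (s := Finset.univ) (f := fun l => |ξ l|) (fun _ _ => abs_nonneg _)
    calc ‖ξ‖ * ‖W ξ‖ ≤ (∑ l, |ξ l|) * ‖W ξ‖ := by gcongr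
      _ = ∑ l, |ξ l| * ‖W ξ‖ := Finset.sum_mul ..
      _ ≤ _ := Finset.sum_le_sum fun l _ => by
        rw [hco]
        have : 0 ≤ |ξ l| * ‖W ξ‖ := by positivity
        nlinarith [Real.pi_gt_three]
  have hle : eLpNorm (fun ξ : Ed d => 2 * π * I * (ξ k : ℂ) * W ξ) 2 volume
      ≤ ENNReal.ofReal (2 * π) * eLpNorm (fun ξ : Ed d => (‖ξ‖ : ℂ) * 𝓕 (resDil d h (-I) ⇑u) ξ) 2 volume := by
    refine eLpNorm_le_mul_eLpNorm_of_ae_le_mul (ae_of_all _ fun ξ => ?_) 2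
    rw [hco, hD]
    have : |ξ k| ≤ ‖ξ‖ := PiLp.norm_apply_le ξ k
    gcongr
  rw [← hP k, Dnorm]
  have := ENNReal.toReal_mono (ENNReal.mul_ne_top ENNReal.ofReal_ne_top hfin) hle
  rwa [ENNReal.toReal_mul, ENNReal.toReal_ofReal (by positivity)] at this

lemma Vd_conj {d : ℕ} (h c : ℝ) (F : Ed d → ℂ) :
    eLpNorm (Vd d h c (fun x => conj (F x))) 2 volume = eLpNorm (Vd d h c F) 2 volume := by
  refine eLpNorm_congr_norm_ae (ae_of_all _ fun x => ?_)
  have : Vd d h c (fun x => conj (F x)) x = conj (Vd d h c F x) := by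
    rw [Vd, Vd, ← integral_conj]
    refine integral_congr_ae (ae_of_all _ fun s => ?_)
    simp only [dil, map_mul, Complex.conj_ofReal]
  rw [this, RCLike.norm_conj]


lemma half_bound {d : ℕ} {H : Ed d → Fin d → Fin d → ℝ} (hH : ∀ j k, MemSdil d fun x => H x j k)
    {M : ℝ} (hM : ∀ (j k : Fin d) (n : ℕ), n ≤ 4 → ∀ x, |(xdotOp d)^[n] (fun y => H y j k) x| ≤ M)
    {h : ℝ} (hh : 0 < h) (hh' : h < 1/4) (u₁ u₂ : SchwartzMap (Ed d) ℂ) {S : Set ℝ} {ε : ℝ}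
    (hSε : (S = Set.Ioi 0 ∧ ε = 1) ∨ (S = Set.Iic 0 ∧ ε = -1)) :
    IntegrableOn (fun t : ℝ => ((Real.exp (-|t|) * t : ℝ) : ℂ) *
      pairL2 d (dil d (t * h) (divGrad d (bCoef d H (t * h)) ⇑u₁)) ⇑u₂) S ∧
    ‖∫ t in S, ((Real.exp (-|t|) * t : ℝ) : ℂ) *
      pairL2 d (dil d (t * h) (divGrad d (bCoef d H (t * h)) ⇑u₁)) ⇑u₂‖
      ≤ ∑ _j : Fin d, ∑ _k : Fin d, 8 * (42 * (1 + M)) * (∫ t, Real.exp (-(1/8*|t|))) *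
        ((2 * π * Dnorm d (resDil d h (-I) ⇑u₁)) * (2 * π * Dnorm d (resDil d h (-I) ⇑u₂))) := by
  have hSm : MeasurableSet S := by
    rcases hSε with ⟨rfl, _⟩ | ⟨rfl, _⟩
    exacts [measurableSet_Ioi, measurableSet_Iic]
  have habs : ∀ t ∈ S, |t| = ε * t := by
    intro t ht
    rcases hSε with ⟨rfl, rfl⟩ | ⟨rfl, rfl⟩
    · rw [abs_of_pos ht, one_mul]
    · rw [abs_of_nonpos ht, neg_one_mul]
  let F : Fin d → Ed d → ℂ := fun k x => conj (pd d k u₁ x)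
  let a : Fin d → Fin d → Ed d → ℝ := fun j k x => Gmat d H x j k
  have hG : ∀ j k, CbSmooth d (a j k) := fun j k => Gmat_smooth (hH j k).1
  have hb1 : ∀ j k, ContDiff ℝ (⊤ : ℕ∞) (xdotOp d (a j k)) := fun j k => xdot_contDiff (hG j k).1
  have hFc : ∀ k, Continuous (F k) := fun k => Complex.continuous_conj.comp (pd_cont k u₁)
  have hc := fun j k => core (d := d) (a := a j k) (b := xdotOp d (a j k))
    (e := xdotOp d (xdotOp d (a j k))) S hSε hh hh' (K := 1 + M)
    (hG j k).1.continuous (hb1 j k).continuous (xdot_contDiff (hb1 j k)).continuous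
    (orbit_deriv (diff_of_smooth (hG j k).1)) (orbit_deriv (diff_of_smooth (hb1 j k)))
    (by
      intro x
      have h0 := hM j k 0 (by norm_num) x
      simp only [Function.iterate_zero, id] at h0
      simp only [a, Gmat]
      refine (abs_add_le _ _).trans (add_le_add ?_ h0)
      split_ifs <;> simp)
    (by
      intro x
      have h0 := hM j k 1 (by norm_num) x
      simp only [Function.iterate_one] at h0
      simp only [a]; rw [xdot_Gmat]; linarith)
    (by
      intro x
      have h0 := hM j k 2 (by norm_num) x
      simp only [Function.iterate_succ, Function.iterate_zero, Function.comp, id] at h0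
      simp only [a]; rw [xdot_Gmat]; linarith)
    (F := F k) (g := pd d j ⇑u₂) (hFc k) (pd_cont j u₂)
    ((pd_int k u₁).mono (hFc k).aestronglyMeasurable (ae_of_all _ fun x => by simp [F])) (pd_int j u₂)
    (by
      rw [show eLpNorm (F k) 2 volume = eLpNorm (pd d k ⇑u₁) 2 volume from
        eLpNorm_congr_norm_ae (ae_of_all _ fun x => by simp [F])]
      exact pd_L2 k u₁) (pd_L2 j u₂)
  let Ij : Fin d → Fin d → ℝ → ℂ := fun j k t => ∫ x, (kW0 d (a j k) (xdotOp d (a j k)) ε h t x : ℂ) *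
    (F k x * dil d (t * (-h)) (pd d j ⇑u₂) x)
  have hI : ∀ j k, IntegrableOn (Ij j k) S := fun j k => (hc j k).1.integral_prod_left
  have hIe : ∀ j k, ‖∫ t in S, Ij j k t‖ ≤ 8 * (42 * (1 + M)) * (∫ t, Real.exp (-(1/8*|t|))) *
        ((2 * π * Dnorm d (resDil d h (-I) ⇑u₁)) * (2 * π * Dnorm d (resDil d h (-I) ⇑u₂))) := by
    intro j k
    have hK : 0 ≤ 1 + M := by
      have := (abs_nonneg _).trans (hM j k 0 (by norm_num) 0)
      linarith
    have hJ : 0 ≤ ∫ t, Real.exp (-(1/8*|t|)) := integral_nonneg fun t => (Real.exp_pos _).le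
    have h1 := (hc j k).2
    rw [integral_prod _ (hc j k).1] at h1
    refine h1.trans ?_
    have e1 : (eLpNorm (Vd d h (1 - h) (F k)) 2 volume).toReal ≤ 2 * π * Dnorm d (resDil d h (-I) ⇑u₁) := by
      rw [show F k = fun x => conj (pd d k u₁ x) from rfl, Vd_conj]
      exact Vd_pd_le k u₁ hh.le (by linarith)
    have e2 := Vd_pd_le j u₂ hh.le (by linarith : h < 1)
    gcongr
    exact ENNReal.toReal_nonneg.trans e1
  have hΦ : ∀ t ∈ S, ((Real.exp (-|t|) * t : ℝ) : ℂ) *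
      pairL2 d (dil d (t * h) (divGrad d (bCoef d H (t * h)) ⇑u₁)) ⇑u₂ = ∑ j, ∑ k, Ij j k t := by
    intro t ht
    by_cases ht0 : t = 0
    · subst ht0
      simp [Ij, kW0_zero]
    · have hτ : t * h ≠ 0 := mul_ne_zero ht0 hh.ne'
      rw [pair_eq (t * h) (fun j k => bCoef_temperate (hH j k).1 hτ), Finset.mul_sum]
      refine Finset.sum_congr rfl fun j _ => ?_
      rw [Finset.mul_sum]
      refine Finset.sum_congr rfl fun k _ => ?_
      rw [← integral_const_mul, ← integral_const_mul]
      refine integral_congr_ae (ae_of_all _ fun x => ?_)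
      simp only [F]
      rw [kW0, ← kN_eq j k (hG j k).1 hh.ne', mul_neg]
      have : Real.exp (-((ε + h) * t)) = Real.exp (-|t|) * Real.exp (-(t * h)) := by
        rw [← Real.exp_add, habs t ht]; congr 1; ring
      rw [this]
      push_cast
      ring
  refine ⟨?_, ?_⟩
  · refine IntegrableOn.congr_fun (f := fun t => ∑ j, ∑ k, Ij j k t) ?_ (fun t ht => (hΦ t ht).symm) hSm
    exact integrable_finsetSum _ fun j _ => integrable_finsetSum _ fun k _ => hI j k
  · rw [setIntegral_congr_fun hSm hΦ, integral_finsetSum]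
    · refine (norm_sum_le _ _).trans (Finset.sum_le_sum fun j _ => ?_)
      rw [integral_finsetSum _ fun k _ => hI j k]
      exact (norm_sum_le _ _).trans (Finset.sum_le_sum fun k _ => hIe j k)
    · exact fun j _ => integrable_finsetSum _ fun k _ => hI j k

/-- **Proposition (bound for `𝒞_{h,H}`).** For every `0 < h₀ < 1/4` there is `C > 0`
such that the bilinear form
`(𝒞_{h,H}u₁, u₂) = (1/2) ∫_ℝ e^{-|t|} t (e^{ithA} B_{th} u₁, u₂) dt`
(where `B_τ = τ ∫₀¹ s Q_{sτ} ds` and `Q_s = ∫₀¹ (dP_τ/dτ)|_{τ=σs} dσ`, so that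
`P_{sh} = P₀ + sh Q_{sh}`) satisfies
`|(𝒞_{h,H}u₁,u₂)| ≤ C (1+‖H‖_{4,dil}) ‖|D|(hA+i)⁻¹u₁‖_{L²} ‖|D|(hA+i)⁻¹u₂‖_{L²}`
for all Schwartz `u₁, u₂`, all `0 < h < h₀` and all `H` (`M` is any bound for
`‖H‖_{4,dil}`). -/
theorem statement12 (d : ℕ) (h₀ : ℝ) (hh₀ : 0 < h₀) (hh₀' : h₀ < 1 / 4) :
    ∃ C : ℝ, 0 < C ∧
      ∀ H : Ed d → Fin d → Fin d → ℝ,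
        (∀ j k, MemSdil d fun x => H x j k) →
        (∀ x j k, H x j k = H x k j) →
        UniformlyElliptic d (Gmat d H) →
        ∀ M : ℝ,
          (∀ (j k : Fin d) (n : ℕ), n ≤ 4 →
            ∀ x, |(xdotOp d)^[n] (fun y => H y j k) x| ≤ M) →
          ∀ h : ℝ, 0 < h → h < h₀ →
            ∀ u₁ u₂ : SchwartzMap (Ed d) ℂ,
              ‖(1 / 2 : ℂ) * ∫ t : ℝ, ((Real.exp (-|t|) * t : ℝ) : ℂ) *
                  pairL2 d (dil d (t * h) (divGrad d (bCoef d H (t * h)) ⇑u₁)) ⇑u₂‖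
                ≤ C * (1 + M) * Dnorm d (resDil d h (-Complex.I) ⇑u₁) *
                    Dnorm d (resDil d h (-Complex.I) ⇑u₂) := by
  have hJ : 0 ≤ ∫ t, Real.exp (-(1/8*|t|)) := integral_nonneg fun t => (Real.exp_pos _).le
  set J := ∫ t, Real.exp (-(1/8*|t|)) with hJdef
  refine ⟨1 + d * (d * (8 * 42 * J * (2 * π) ^ 2)), by positivity, ?_⟩
  intro H hH _ _ M hM h hh hhh u₁ u₂
  have hh' : h < 1/4 := hhh.trans hh₀'
  obtain ⟨i1, b1⟩ := half_bound hH hM hh hh' u₁ u₂ (S := Set.Ioi 0) (ε := 1) (Or.inl ⟨rfl, rfl⟩)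
  obtain ⟨i2, b2⟩ := half_bound hH hM hh hh' u₁ u₂ (S := Set.Iic 0) (ε := -1) (Or.inr ⟨rfl, rfl⟩)
  rw [← intervalIntegral.integral_Iic_add_Ioi i2 i1, norm_mul]
  set D1 := Dnorm d (resDil d h (-Complex.I) ⇑u₁) with hD1
  set D2 := Dnorm d (resDil d h (-Complex.I) ⇑u₂) with hD2
  have hD1' : 0 ≤ D1 := ENNReal.toReal_nonneg
  have hD2' : 0 ≤ D2 := ENNReal.toReal_nonneg
  simp only [Finset.sum_const, Finset.card_univ, Fintype.card_fin, nsmul_eq_mul, ← hJdef] at b1 b2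
  have hn : ‖(1 / 2 : ℂ)‖ = 1 / 2 := by simp
  rw [hn]
  have hp : 0 ≤ (1 + M) * D1 * D2 := by
    rcases Nat.eq_zero_or_pos d with hd | hd
    · subst hd
      have : D1 = 0 := by
        have hz : (fun ξ : Ed 0 => (‖ξ‖ : ℂ) * 𝓕 (resDil 0 h (-Complex.I) ⇑u₁) ξ) = 0 := by
          funext ξ
          rw [Subsingleton.elim ξ 0]; simp
        rw [hD1, Dnorm, hz]; simp
      simp [this]
    · have := (abs_nonneg _).trans (hM ⟨0, hd⟩ ⟨0, hd⟩ 0 (by norm_num) 0)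
      have : 0 ≤ 1 + M := by linarith
      positivity
  have := norm_add_le (∫ t in Set.Iic (0:ℝ), ((Real.exp (-|t|) * t : ℝ) : ℂ) *
      pairL2 d (dil d (t * h) (divGrad d (bCoef d H (t * h)) ⇑u₁)) ⇑u₂)
    (∫ t in Set.Ioi (0:ℝ), ((Real.exp (-|t|) * t : ℝ) : ℂ) *
      pairL2 d (dil d (t * h) (divGrad d (bCoef d H (t * h)) ⇑u₁)) ⇑u₂)
  nlinarith [this, b1, b2, hp]

end
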